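/- arXiv:2406.15779 — 5 statements merged into one kernel-verified Lean document; each statement's English description precedes it below -/
import Mathlib

section
/- Suppose the topology generated on K by the metric d is strictly finer than the topology of K. Then there exists a linear isometric embedding of c₀ (the Banach space of real sequences converging to 0, with the supremum norm) into C(K) whose range consists of d-Lipschitz functions. -/
open Set Filter Topology

namespace LipC0

/-- Closed `r`-neighbourhood of `A` with respect to `d`. -/
def Nb {K : Type*} (d : K → K → ℝ) (A : Set K) (r : ℝ) : Set K := {y | ∃ x ∈ A, d x y ≤ r}

section
variable {K : Type*} [TopologicalSpace K] [CompactSpace K] [T2Space K] {d : K → K → ℝ}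

lemma Nb_mono {A B : Set K} (h : A ⊆ B) (r : ℝ) : Nb d A r ⊆ Nb d B r := by
  rintro y ⟨x, hx, hxy⟩
  exact ⟨x, h hx, hxy⟩

lemma Nb_closed (hl : LowerSemicontinuous fun p : K × K => d p.1 p.2) {A : Set K}
    (hA : IsClosed A) (r : ℝ) : IsClosed (Nb d A r) := by
  have h1 : IsClosed ({p : K × K | p.1 ∈ A} ∩ {p : K × K | d p.1 p.2 ≤ r}) :=
    (hA.preimage continuous_fst).inter (hl.isClosed_preimage r)
  have h2 := isClosedMap_snd_of_compactSpace (X := K) (Y := K) _ h1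
  convert h2 using 1
  ext y
  constructor
  · rintro ⟨x, hx, hxy⟩
    exact ⟨(x, y), ⟨hx, hxy⟩, rfl⟩
  · rintro ⟨⟨x, z⟩, ⟨hx, hxy⟩, rfl⟩
    exact ⟨x, hx, hxy⟩

lemma insert_one (hl : LowerSemicontinuous fun p : K × K => d p.1 p.2) {F U : Set K}
    (hF : IsClosed F) (hU : IsOpen U) (r : ℝ) (h : Nb d F r ⊆ U) :
    ∃ V, IsOpen V ∧ F ⊆ V ∧ Nb d (closure V) r ⊆ U := by
  have ho : IsOpen {p : K × K | r < d p.1 p.2} := hl.isOpen_preimage r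
  have hsub : F ×ˢ Uᶜ ⊆ {p : K × K | r < d p.1 p.2} := by
    rintro ⟨x, y⟩ ⟨hx, hy⟩
    by_contra hc
    exact hy (h ⟨x, hx, not_lt.1 hc⟩)
  obtain ⟨u, v, hu, hv, hFu, hUv, huv⟩ :=
    generalized_tube_lemma hF.isCompact hU.isClosed_compl.isCompact ho hsub
  obtain ⟨V, hV, hFV, hVu⟩ := normal_exists_closure_subset hF hu hFu
  refine ⟨V, hV, hFV, ?_⟩
  rintro y ⟨x, hx, hxy⟩
  by_contra hy
  have : r < d x y := huv (show (x, y) ∈ u ×ˢ v from ⟨hVu hx, hUv hy⟩)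
  linarith

lemma insert_fin (hl : LowerSemicontinuous fun p : K × K => d p.1 p.2) {F : Set K}
    (hF : IsClosed F) {ι : Type*} (s : Finset ι) (U : ι → Set K) (r : ι → ℝ)
    (hU : ∀ k ∈ s, IsOpen (U k)) (h : ∀ k ∈ s, Nb d F (r k) ⊆ U k) :
    ∃ V, IsOpen V ∧ F ⊆ V ∧ ∀ k ∈ s, Nb d (closure V) (r k) ⊆ U k := by
  classical
  induction s using Finset.induction_on with
  | empty => exact ⟨univ, isOpen_univ, subset_univ _, by simp⟩
  | insert a s ha ih =>
    obtain ⟨V, hV, hFV, hVU⟩ := ih (fun k hk => hU k (Finset.mem_insert_of_mem hk))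
      (fun k hk => h k (Finset.mem_insert_of_mem hk))
    obtain ⟨W, hW, hFW, hWU⟩ := insert_one hl hF (hU a (Finset.mem_insert_self _ _)) (r a)
      (h a (Finset.mem_insert_self _ _))
    refine ⟨V ∩ W, hV.inter hW, subset_inter hFV hFW, ?_⟩
    intro k hk
    rcases Finset.mem_insert.1 hk with rfl | hk
    · exact (Nb_mono (closure_mono inter_subset_right) _).trans hWU
    · exact (Nb_mono (closure_mono inter_subset_left) _).trans (hVU k hk)

/-- Compatible family of open sets for the first `n` levels. -/
def Good (d : K → K → ℝ) (q : ℕ → ℝ) (x₀ y₀ : K) (n : ℕ) (S : ℕ → Set K) : Prop :=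
  ∀ i < n, IsOpen (S i) ∧ Nb d {x₀} (q i) ⊆ S i ∧ Nb d (closure (S i)) (1 - q i) ⊆ {y₀}ᶜ ∧
    ∀ j < n, q i < q j → Nb d (closure (S i)) (q j - q i) ⊆ S j

lemma good_step (htri : ∀ x y z, d x z ≤ d x y + d y z)
    (hl : LowerSemicontinuous fun p : K × K => d p.1 p.2) (q : ℕ → ℝ) {x₀ y₀ : K}
    (hxy : 1 < d x₀ y₀) (n : ℕ) (S : ℕ → Set K) (hS : Good d q x₀ y₀ n S) :
    ∃ V, Good d q x₀ y₀ (n + 1) (Function.update S n V) := by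
  classical
  let I := (Finset.range n).filter (fun i => q i < q n)
  let F : Set K := Nb d {x₀} (q n) ∪ ⋃ i ∈ I, Nb d (closure (S i)) (q n - q i)
  have hF : IsClosed F := (Nb_closed hl isClosed_singleton _).union
    (I.finite_toSet.isClosed_biUnion fun i _ => Nb_closed hl isClosed_closure _)
  let s : Finset (Option ℕ) :=
    insert none (((Finset.range n).filter (fun j => q n < q j)).image some)
  let U : Option ℕ → Set K := fun o => o.elim {y₀}ᶜ S
  let r : Option ℕ → ℝ := fun o => o.elim (1 - q n) (fun j => q j - q n)
  obtain ⟨V, hV, hFV, hVU⟩ := insert_fin hl hF s U r (by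
      intro k hk
      rcases k with _ | j
      · exact isOpen_compl_singleton
      · have hj : j < n ∧ q n < q j := by simpa [s] using hk
        exact (hS j hj.1).1) (by
      intro k hk
      rcases k with _ | j
      · rintro z ⟨x, hx, hxz⟩
        change d x z ≤ 1 - q n at hxz
        change z ∈ ({y₀}ᶜ : Set K)
        rcases hx with ⟨w, hw, hwx⟩ | hx
        · rw [mem_singleton_iff] at hw
          subst hw
          intro hz
          rw [mem_singleton_iff] at hz
          subst hz
          have := htri w x z
          linarith
        · simp only [mem_iUnion] at hx
          obtain ⟨i, hi, w, hw, hwx⟩ := hx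
          have hi' : i < n ∧ q i < q n := by simpa [I] using hi
          refine (hS i hi'.1).2.2.1 ⟨w, hw, ?_⟩
          have := htri w x z
          linarith
      · have hj : j < n ∧ q n < q j := by simpa [s] using hk
        rintro z ⟨x, hx, hxz⟩
        change d x z ≤ q j - q n at hxz
        change z ∈ S j
        rcases hx with ⟨w, hw, hwx⟩ | hx
        · refine (hS j hj.1).2.1 ⟨w, hw, ?_⟩
          have := htri w x z
          linarith
        · simp only [mem_iUnion] at hx
          obtain ⟨i, hi, w, hw, hwx⟩ := hx
          have hi' : i < n ∧ q i < q n := by simpa [I] using hi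
          refine (hS i hi'.1).2.2.2 j hj.1 (hi'.2.trans hj.2) ⟨w, hw, ?_⟩
          have := htri w x z
          linarith)
  refine ⟨V, ?_⟩
  intro i hi
  rcases Nat.lt_succ_iff_lt_or_eq.1 hi with hi | rfl
  · rw [Function.update_of_ne hi.ne]
    refine ⟨(hS i hi).1, (hS i hi).2.1, (hS i hi).2.2.1, ?_⟩
    intro j hj hij
    rcases Nat.lt_succ_iff_lt_or_eq.1 hj with hj | rfl
    · rw [Function.update_of_ne hj.ne]
      exact (hS i hi).2.2.2 j hj hij
    · rw [Function.update_self]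
      refine Subset.trans ?_ hFV
      refine Subset.trans ?_ subset_union_right
      have hiI : i ∈ I := by simp [I, hi, hij]
      exact subset_biUnion_of_mem (u := fun i => Nb d (closure (S i)) (q j - q i)) hiI
  · rw [Function.update_self]
    refine ⟨hV, subset_union_left.trans hFV, hVU none (by simp [s]), ?_⟩
    intro j hj hij
    rcases Nat.lt_succ_iff_lt_or_eq.1 hj with hj | rfl
    · rw [Function.update_of_ne hj.ne]
      exact hVU (some j) (by simp [s, hj, hij])
    · exact absurd hij (lt_irrefl _)

lemma good_seq (htri : ∀ x y z, d x z ≤ d x y + d y z)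
    (hl : LowerSemicontinuous fun p : K × K => d p.1 p.2) (q : ℕ → ℝ) {x₀ y₀ : K}
    (hxy : 1 < d x₀ y₀) : ∃ U : ℕ → Set K, ∀ n, Good d q x₀ y₀ n U := by
  choose step hstep using good_step htri hl q hxy
  let T : (n : ℕ) → {S : ℕ → Set K // Good d q x₀ y₀ n S} := fun n =>
    Nat.rec ⟨fun _ => ∅, fun i hi => absurd hi (Nat.not_lt_zero i)⟩
      (fun n p => ⟨Function.update p.1 n (step n p.1 p.2), hstep n p.1 p.2⟩) n
  have hT : ∀ n, (T (n + 1)).1 = Function.update (T n).1 n (step n (T n).1 (T n).2) :=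
    fun n => rfl
  have hU : ∀ i n, i + 1 ≤ n → (T n).1 i = (T (i + 1)).1 i := by
    intro i n hn
    induction n, hn using Nat.le_induction with
    | base => rfl
    | succ n hn ih =>
      rw [hT, Function.update_of_ne (by omega), ih]
  refine ⟨fun i => (T (i + 1)).1 i, ?_⟩
  intro n i hi
  have h := (T n).2 i hi
  have e : ∀ j < n, (T n).1 j = (T (j + 1)).1 j := fun j hj => hU j n hj
  rw [e i hi] at h
  refine ⟨h.1, h.2.1, h.2.2.1, fun j hj hij => ?_⟩
  have := h.2.2.2 j hj hij
  rwa [e j hj] at this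

lemma separate_one (hsymm : ∀ x y, d x y = d y x) (hnn : ∀ x y, 0 ≤ d x y)
    (hself : ∀ x, d x x = 0) (htri : ∀ x y z, d x z ≤ d x y + d y z)
    (hl : LowerSemicontinuous fun p : K × K => d p.1 p.2) {x₀ y₀ : K}
    (hxy : 1 < d x₀ y₀) : ∃ f : C(K, ℝ), (∀ x, 0 ≤ f x) ∧ (∀ x, f x ≤ 1) ∧ f x₀ = 0 ∧ f y₀ = 1 ∧
      ∀ x y, |f x - f y| ≤ d x y := by
  classical
  have : Nonempty (Ioo (0 : ℝ) 1) := ⟨⟨1 / 2, by norm_num, by norm_num⟩⟩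
  let q : ℕ → ℝ := fun n => (TopologicalSpace.denseSeq (Ioo (0 : ℝ) 1) n : ℝ)
  have hq0 : ∀ n, 0 < q n := fun n => (TopologicalSpace.denseSeq (Ioo (0 : ℝ) 1) n).2.1
  have hq1 : ∀ n, q n < 1 := fun n => (TopologicalSpace.denseSeq (Ioo (0 : ℝ) 1) n).2.2
  have hqd : ∀ a b, 0 ≤ a → b ≤ 1 → a < b → ∃ n, a < q n ∧ q n < b := by
    intro a b ha hb hab
    have ho : IsOpen {z : Ioo (0 : ℝ) 1 | a < z.1 ∧ z.1 < b} :=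
      (isOpen_Ioo (a := a) (b := b)).preimage continuous_subtype_val
    obtain ⟨_, hz, n, rfl⟩ := (TopologicalSpace.denseRange_denseSeq (Ioo (0 : ℝ) 1)).exists_mem_open ho
      ⟨⟨(a + b) / 2, by constructor <;> linarith⟩, by constructor <;> simp <;> linarith⟩ |>.imp
        (fun n hn => hn) |> fun ⟨n, hn⟩ => (⟨_, hn, n, rfl⟩ : ∃ z, z ∈ {z : Ioo (0 : ℝ) 1 | a < z.1 ∧ z.1 < b} ∧
          ∃ n, TopologicalSpace.denseSeq (Ioo (0 : ℝ) 1) n = z)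
    exact ⟨n, hz⟩
  obtain ⟨U, hU⟩ := good_seq htri hl q hxy
  have hopen : ∀ i, IsOpen (U i) := fun i => (hU (i + 1) i (by omega)).1
  have hx₀ : ∀ i, x₀ ∈ U i := fun i => (hU (i + 1) i (by omega)).2.1
    ⟨x₀, rfl, by rw [hself]; exact (hq0 i).le⟩
  have hy₀ : ∀ i, y₀ ∉ U i := fun i hi => (hU (i + 1) i (by omega)).2.2.1
    ⟨y₀, subset_closure hi, by rw [hself]; linarith [hq1 i]⟩ rfl
  have hpair : ∀ i j, q i < q j → Nb d (closure (U i)) (q j - q i) ⊆ U j := fun i j h =>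
    (hU (max i j + 1) i (by omega)).2.2.2 j (by omega) h
  have hcl : ∀ i j, q i < q j → closure (U i) ⊆ U j := fun i j h x hx =>
    hpair i j h ⟨x, hx, by rw [hself]; linarith⟩
  let f : K → ℝ := fun x => ⨅ i, if x ∈ U i then q i else 1
  have hbdd : ∀ x, BddBelow (range fun i => if x ∈ U i then q i else 1) := by
    intro x
    refine ⟨0, ?_⟩
    rintro _ ⟨i, rfl⟩
    dsimp only
    split_ifs
    · exact (hq0 i).le
    · exact zero_le_one
  have hle : ∀ x i, f x ≤ if x ∈ U i then q i else 1 := fun x i => ciInf_le (hbdd x) i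
  have ha : ∀ x i, x ∈ U i → f x ≤ q i := fun x i hx => by simpa [hx] using hle x i
  have hf0 : ∀ x, 0 ≤ f x := by
    intro x
    refine le_ciInf fun i => ?_
    split_ifs
    · exact (hq0 i).le
    · exact zero_le_one
  have hf1 : ∀ x, f x ≤ 1 := by
    intro x
    refine (hle x 0).trans ?_
    split_ifs
    · exact (hq1 0).le
    · exact le_rfl
  have hb : ∀ x j, x ∉ U j → q j ≤ f x := by
    intro x j hx
    refine le_ciInf fun i => ?_
    split_ifs with hi
    · by_contra hc
      exact hx (hcl i j (not_le.1 hc) (subset_closure hi))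
    · exact (hq1 j).le
  have hc : ∀ x t, f x < t → (∃ i, x ∈ U i ∧ q i < t) ∨ 1 < t := by
    intro x t ht
    obtain ⟨i, hi⟩ := exists_lt_of_ciInf_lt ht
    split_ifs at hi with h
    · exact Or.inl ⟨i, h, hi⟩
    · exact Or.inr hi
  have hcont : Continuous f := by
    rw [continuous_iff_lower_upperSemicontinuous]
    constructor
    · intro x t ht
      by_cases ht0 : t < 0
      · exact Eventually.of_forall fun x' => ht0.trans_le (hf0 x')
      obtain ⟨k, hk1, hk2⟩ := hqd t (f x) (not_lt.1 ht0) (hf1 x) ht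
      obtain ⟨j, hj1, hj2⟩ := hqd t (q k) (not_lt.1 ht0) (hq1 k).le hk1
      have hxj : x ∈ (closure (U j))ᶜ := fun h =>
        absurd (ha x k (hcl j k hj2 h)) (not_le.2 hk2)
      filter_upwards [isClosed_closure.isOpen_compl.mem_nhds hxj] with x' hx'
      exact hj1.trans_le (hb x' j fun h => hx' (subset_closure h))
    · intro x t ht
      rcases hc x t ht with ⟨i, hi, hit⟩ | h
      · filter_upwards [(hopen i).mem_nhds hi] with x' hx'
        exact (ha x' i hx').trans_lt hit
      · exact Eventually.of_forall fun x' => (hf1 x').trans_lt h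
  have hlip : ∀ x y, f y ≤ f x + d x y := by
    intro x y
    by_contra hcon
    rw [not_le] at hcon
    obtain ⟨j, hj1, hj2⟩ := hqd _ _ (add_nonneg (hf0 x) (hnn x y)) (hf1 y) hcon
    rcases hc x (q j - d x y) (by linarith) with ⟨i, hi, hit⟩ | h
    · have : y ∈ U j := hpair i j (by linarith [hnn x y])
        ⟨x, subset_closure hi, by linarith⟩
      linarith [ha y j this]
    · linarith [hq1 j, hnn x y]
  refine ⟨⟨f, hcont⟩, hf0, hf1, ?_, ?_, ?_⟩
  · refine le_antisymm ?_ (hf0 _)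
    by_contra hcon
    rw [not_le] at hcon
    obtain ⟨j, -, hj2⟩ := hqd _ _ le_rfl (hf1 x₀) hcon
    exact absurd (ha x₀ j (hx₀ j)) (not_le.2 hj2)
  · refine le_antisymm (hf1 _) (le_ciInf fun i => ?_)
    simp [hy₀ i]
  · intro x y
    have h1 := hlip x y
    have h2 := hlip y x
    rw [hsymm y x] at h2
    change |f x - f y| ≤ _
    rw [abs_le]
    constructor <;> linarith

lemma separate (hsymm : ∀ x y, d x y = d y x) (hnn : ∀ x y, 0 ≤ d x y)
    (hself : ∀ x, d x x = 0) (htri : ∀ x y z, d x z ≤ d x y + d y z)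
    (hl : LowerSemicontinuous fun p : K × K => d p.1 p.2) {x₀ y₀ : K} {c : ℝ} (hc : 0 < c)
    (hxy : 1 < c * d x₀ y₀) :
    ∃ f : C(K, ℝ), (∀ x, 0 ≤ f x) ∧ (∀ x, f x ≤ 1) ∧ f x₀ = 0 ∧ f y₀ = 1 ∧
      ∀ x y, |f x - f y| ≤ c * d x y := by
  refine separate_one (d := fun x y => c * d x y) (fun x y => by rw [hsymm])
    (fun x y => mul_nonneg hc.le (hnn x y)) (fun x => by rw [hself, mul_zero])
    (fun x y z => ?_) ?_ hxy
  · rw [← mul_add]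
    exact mul_le_mul_of_nonneg_left (htri x y z) hc.le
  · intro p t ht
    have h : t / c < d p.1 p.2 := by rw [div_lt_iff₀ hc]; linarith
    filter_upwards [hl p _ h] with p' hp'
    rw [gt_iff_lt, div_lt_iff₀ hc] at hp'
    linarith

lemma finset_bound (x₀ : K) (c : ℝ) (hc : 0 ≤ c) (hnn : ∀ x y, 0 ≤ d x y)
    (s : Finset (C(K, ℝ) × C(K, ℝ)))
    (h : ∀ p ∈ s, p.1 x₀ = 0 ∧ ∀ x y, |p.1 x - p.1 y| ≤ c * d x y) :
    ∃ ψ : C(K, ℝ), (∀ x, 0 ≤ ψ x) ∧ ψ x₀ = 0 ∧ (∀ x y, |ψ x - ψ y| ≤ c * d x y) ∧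
      ∀ p ∈ s, ∀ x, p.1 x ≤ ψ x := by
  classical
  induction s using Finset.induction_on with
  | empty => exact ⟨0, by simp, by simp, fun x y => by simpa using mul_nonneg hc (hnn x y), by simp⟩
  | insert a s ha ih =>
    obtain ⟨ψ, h1, h2, h3, h4⟩ := ih (fun k hk => h k (Finset.mem_insert_of_mem hk))
    obtain ⟨ha1, ha2⟩ := h a (Finset.mem_insert_self _ _)
    refine ⟨ψ ⊔ a.1, fun x => le_sup_of_le_left (h1 x), by simp [h2, ha1], ?_, ?_⟩
    · intro x y
      exact (abs_max_sub_max_le_max _ _ _ _).trans (max_le (h3 x y) (ha2 x y))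
    · intro p hp x
      rcases Finset.mem_insert.1 hp with rfl | hp
      · exact le_sup_right
      · exact (h4 p hp x).trans le_sup_left

lemma bump_seq (hsymm : ∀ x y, d x y = d y x) (hnn : ∀ x y, 0 ≤ d x y)
    (hself : ∀ x, d x x = 0) (htri : ∀ x y z, d x z ≤ d x y + d y z)
    (hl : LowerSemicontinuous fun p : K × K => d p.1 p.2) {x₀ : K} {c : ℝ} (hc : 0 < c)
    (hx : ∀ V ∈ 𝓝 x₀, ∃ y ∈ V, 1 < c * d x₀ y) :
    ∃ g : ℕ → C(K, ℝ), (∀ n x, 0 ≤ g n x) ∧ (∀ n x, g n x ≤ 1) ∧ (∀ n, ∃ y, g n y = 1) ∧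
      (∀ n x y, |g n x - g n y| ≤ (8 * c) * d x y) ∧
      ∀ m n, m < n → ∀ x, g m x = 0 ∨ g n x = 0 := by
  obtain ⟨F, hF, hR⟩ := exists_seq_of_forall_finset_exists
    (fun p : C(K, ℝ) × C(K, ℝ) => (p.1 x₀ = 0 ∧ ∀ x y, |p.1 x - p.1 y| ≤ c * d x y) ∧
      (∀ x, 0 ≤ p.2 x) ∧ (∀ x, p.2 x ≤ 1) ∧ (∃ y, p.2 y = 1) ∧
      (∀ x y, |p.2 x - p.2 y| ≤ (8 * c) * d x y) ∧ ∀ x, p.2 x ≠ 0 → 1 / 2 < p.1 x)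
    (fun p p' => ∀ x, p'.2 x ≠ 0 → p.1 x < 1 / 2) (by
      intro s hs
      obtain ⟨ψ, h1, h2, h3, h4⟩ := finset_bound x₀ c hc.le hnn s fun p hp => (hs p hp).1
      obtain ⟨y, hy, hd⟩ := hx {z | ψ z < 1 / 4}
        ((isOpen_lt ψ.continuous continuous_const).mem_nhds (by simp [h2]))
      obtain ⟨φ, k0, k1, k2, k3, k4⟩ := separate hsymm hnn hself htri hl hc hd
      have hy' : ψ y < 1 / 4 := hy
      let g : C(K, ℝ) := ⟨fun x => min 1 (max 0 (4 * (φ x - ψ x) - 2)), by fun_prop⟩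
      have hg : ∀ x, g x = min 1 (max 0 (4 * (φ x - ψ x) - 2)) := fun x => rfl
      have hne : ∀ x, g x ≠ 0 → 1 / 2 < φ x - ψ x := by
        intro x hx
        by_contra hcon
        apply hx
        rw [hg, max_eq_left (by linarith), min_eq_right zero_le_one]
      refine ⟨(φ, g), ⟨⟨k2, k4⟩, ?_, ?_, ⟨y, ?_⟩, ?_, ?_⟩, ?_⟩
      · intro x
        exact le_min zero_le_one (le_max_left _ _)
      · intro x
        exact min_le_left _ _
      · change g y = 1
        rw [hg, min_eq_left]
        refine le_max_of_le_right ?_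
        linarith
      · intro x z
        change |g x - g z| ≤ _
        rw [hg, hg]
        refine (abs_min_sub_min_le_max _ _ _ _).trans (max_le ?_ ?_)
        · simpa using mul_nonneg (mul_nonneg (by norm_num : (0 : ℝ) ≤ 8) hc.le) (hnn x z)
        refine (abs_max_sub_max_le_max _ _ _ _).trans (max_le ?_ ?_)
        · simpa using mul_nonneg (mul_nonneg (by norm_num : (0 : ℝ) ≤ 8) hc.le) (hnn x z)
        have e1 := abs_le.1 (k4 x z)
        have e2 := abs_le.1 (h3 x z)
        rw [abs_le]
        constructor <;> linarith [e1.1, e1.2, e2.1, e2.2]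
      · intro x hx
        have := hne x hx
        change 1 / 2 < φ x
        linarith [h1 x]
      · intro p hp x hx
        have := hne x hx
        linarith [h4 p hp x, k1 x])
  refine ⟨fun n => (F n).2, fun n => (hF n).2.1, fun n => (hF n).2.2.1, fun n => (hF n).2.2.2.1,
    fun n => (hF n).2.2.2.2.1, ?_⟩
  intro m n hmn x
  by_contra hcon
  rw [not_or] at hcon
  have e1 := (hF m).2.2.2.2.2 x hcon.1
  have e2 := hR m n hmn x hcon.2
  linarith

lemma assemble (hnn : ∀ x y, 0 ≤ d x y) (g : ℕ → C(K, ℝ)) (L : ℝ) (hL : 0 ≤ L)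
    (h0 : ∀ n x, 0 ≤ g n x) (h1 : ∀ n x, g n x ≤ 1) (hy : ∀ n, ∃ y, g n y = 1)
    (hlip : ∀ n x y, |g n x - g n y| ≤ L * d x y)
    (hdis : ∀ m n, m < n → ∀ x, g m x = 0 ∨ g n x = 0) :
    ∃ J : ZeroAtInftyContinuousMap ℕ ℝ →L[ℝ] C(K, ℝ),
      (∀ a : ZeroAtInftyContinuousMap ℕ ℝ, ‖J a‖ = ‖a‖) ∧
      (∀ a : ZeroAtInftyContinuousMap ℕ ℝ,
        ∃ L ≥ 0, ∀ t₁ t₂ : K, |J a t₁ - J a t₂| ≤ L * d t₁ t₂) := by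
  classical
  have hex : ∀ x, ∃ n, ∀ m, m ≠ n → g m x = 0 := by
    intro x
    by_cases h : ∃ n, g n x ≠ 0
    · obtain ⟨n, hn⟩ := h
      refine ⟨n, fun m hm => ?_⟩
      rcases lt_or_gt_of_ne hm with h | h
      · exact (hdis m n h x).resolve_right hn
      · exact (hdis n m h x).resolve_left hn
    · push Not at h
      exact ⟨0, fun m _ => h m⟩
  choose N hN using hex
  have hcoe : ∀ (a : ZeroAtInftyContinuousMap ℕ ℝ) n, |a n| ≤ ‖a‖ := by
    intro a n
    have := a.toBCF.norm_coe_le_norm n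
    simpa using this
  have hcont : ∀ a : ZeroAtInftyContinuousMap ℕ ℝ, Continuous fun x => a (N x) * g (N x) x := by
    intro a
    refine continuous_of_uniform_approx_of_continuous fun u hu => ?_
    obtain ⟨ε, hε, hεu⟩ := Metric.mem_uniformity_dist.1 hu
    have hz : Tendsto a atTop (𝓝 0) := by
      have := a.zero_at_infty'
      rwa [cocompact_eq_cofinite, Nat.cofinite_eq_atTop] at this
    obtain ⟨M, hM⟩ := Metric.tendsto_atTop.1 hz ε hε
    refine ⟨fun x => ∑ i ∈ Finset.range M, a i * g i x, by fun_prop, fun x => hεu ?_⟩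
    beta_reduce
    by_cases hx : N x < M
    · rw [Finset.sum_eq_single (N x)]
      · simpa using hε
      · intro b _ hb
        rw [hN x b hb, mul_zero]
      · intro hc
        exact absurd (Finset.mem_range.2 hx) hc
    · rw [Finset.sum_eq_zero]
      · have e := hM (N x) (not_lt.1 hx)
        rw [Real.dist_eq, sub_zero] at e ⊢
        rw [abs_mul, abs_of_nonneg (h0 _ _)]
        exact (mul_le_of_le_one_right (abs_nonneg _) (h1 _ _)).trans_lt e
      · intro i hi
        rw [hN x i (by have := Finset.mem_range.1 hi; omega), mul_zero]
  let J₀ : ZeroAtInftyContinuousMap ℕ ℝ →ₗ[ℝ] C(K, ℝ) :=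
    { toFun := fun a => ⟨fun x => a (N x) * g (N x) x, hcont a⟩
      map_add' := by
        intro a b
        ext x
        simp [add_mul]
      map_smul' := by
        intro r a
        ext x
        simp [mul_assoc] }
  have hJ : ∀ a x, J₀ a x = a (N x) * g (N x) x := fun a x => rfl
  have hle : ∀ a, ‖J₀ a‖ ≤ 1 * ‖a‖ := by
    intro a
    rw [one_mul, ContinuousMap.norm_le _ (norm_nonneg _)]
    intro x
    rw [hJ, Real.norm_eq_abs, abs_mul, abs_of_nonneg (h0 _ _)]
    exact (mul_le_of_le_one_right (abs_nonneg _) (h1 _ _)).trans (hcoe a _)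
  refine ⟨J₀.mkContinuous 1 hle, ?_, ?_⟩
  · intro a
    change ‖J₀ a‖ = ‖a‖
    refine le_antisymm (by simpa using hle a) ?_
    rw [← ZeroAtInftyContinuousMap.norm_toBCF_eq_norm,
      BoundedContinuousFunction.norm_le (norm_nonneg _)]
    intro n
    obtain ⟨y, hy⟩ := hy n
    have hn : n = N y := by
      by_contra hc
      have := hN y n hc
      rw [hy] at this
      exact one_ne_zero this
    have e : J₀ a y = a n := by rw [hJ, ← hn, hy, mul_one]
    have := (J₀ a).norm_coe_le_norm y
    rw [e] at this
    exact this
  · intro a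
    refine ⟨2 * (‖a‖ * L), by positivity, ?_⟩
    intro x y
    change |J₀ a x - J₀ a y| ≤ _
    rw [hJ, hJ]
    have key : ∀ n, |a n * (g n x - g n y)| ≤ ‖a‖ * L * d x y := by
      intro n
      rw [abs_mul, mul_assoc]
      exact mul_le_mul (hcoe a n) (hlip n x y) (abs_nonneg _) (norm_nonneg _)
    by_cases h : N x = N y
    · rw [← h, ← mul_sub]
      refine (key _).trans ?_
      have : 0 ≤ ‖a‖ * L * d x y := (abs_nonneg _).trans (key 0)
      linarith
    · have e1 := abs_le.1 (key (N x))
      have e2 := abs_le.1 (key (N y))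
      rw [hN y (N x) h, sub_zero] at e1
      rw [hN x (N y) (Ne.symm h), zero_sub, mul_neg] at e2
      rw [abs_le]
      constructor <;> linarith [e1.1, e1.2, e2.1, e2.2]

end

end LipC0

/-- If the topology generated on `K` by `d` is strictly finer than the
topology of `K`, then there is a linear isometric embedding of `c₀` into `C(K)` whose
range consists of `d`-Lipschitz functions. Here `c₀` is the Banach space of real sequences
converging to `0` with the supremum norm, formalized as `ZeroAtInftyContinuousMap ℕ ℝ`. -/
theorem exists_isometric_lipschitz_copy_of_c0
    {K : Type*} [TopologicalSpace K] [CompactSpace K] [T2Space K]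
    (d : K → K → ℝ)
    (hd_nonneg : ∀ x y, 0 ≤ d x y)
    (hd_symm : ∀ x y, d x y = d y x)
    (hd_eq : ∀ x y, d x y = 0 ↔ x = y)
    (hd_tri : ∀ x y z, d x z ≤ d x y + d y z)
    (hd_lsc : LowerSemicontinuous fun p : K × K => d p.1 p.2)
    (hfiner : ∀ U : Set K, IsOpen U → ∀ x ∈ U, ∃ ε > 0, {y : K | d x y < ε} ⊆ U)
    (hstrict : ∃ U : Set K, (∀ x ∈ U, ∃ ε > 0, {y : K | d x y < ε} ⊆ U) ∧ ¬ IsOpen U) :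
    ∃ J : ZeroAtInftyContinuousMap ℕ ℝ →L[ℝ] C(K, ℝ),
      (∀ a : ZeroAtInftyContinuousMap ℕ ℝ, ‖J a‖ = ‖a‖) ∧
      (∀ a : ZeroAtInftyContinuousMap ℕ ℝ,
        ∃ L ≥ 0, ∀ t₁ t₂ : K, |J a t₁ - J a t₂| ≤ L * d t₁ t₂) := by
  obtain ⟨U, hU, hno⟩ := hstrict
  rw [isOpen_iff_mem_nhds] at hno
  push Not at hno
  obtain ⟨x₀, hx₀, hn⟩ := hno
  obtain ⟨ε, hε, hsub⟩ := hU x₀ hx₀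
  have hc : (0 : ℝ) < 2 / ε := by positivity
  obtain ⟨g, g0, g1, g2, g3, g4⟩ := LipC0.bump_seq (x₀ := x₀) hd_symm hd_nonneg
    (fun x => (hd_eq x x).2 rfl) hd_tri hd_lsc hc (by
      intro V hV
      by_contra hcon
      push Not at hcon
      refine hn (Filter.mem_of_superset hV fun y hy => hsub ?_)
      have h := hcon y hy
      rw [div_mul_eq_mul_div, div_le_one hε] at h
      have := hd_nonneg x₀ y
      change d x₀ y < ε
      linarith)
  exact LipC0.assemble hd_nonneg g _ (by positivity) g0 g1 g2 g3 g4
end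

section
/- Let K be a compact metric space with metric d and let n ∈ ℕ. The following are equivalent: (i) there exists a surjective Lipschitz map φ : K → [0,1]ⁿ (with [0,1]ⁿ carrying the Euclidean metric); (ii) for every (n+1)-dimensional real normed space X there exists a linear isometric embedding of X into C(K) whose range consists of d-Lipschitz functions; (iii) there exists a linear isometric embedding of the (n+1)-dimensional Euclidean space (ℝ^{n+1}, ‖·‖₂) into C(K) whose range consists of d-Lipschitz functions. -/
theorem aux_normalize {Y : Type*} [NormedAddCommGroup Y] [NormedSpace ℝ Y] (a b : Y)
    (ha : a ≠ 0) (hb : b ≠ 0) :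
    ‖‖a‖⁻¹ • a - ‖b‖⁻¹ • b‖ ≤ 2 * ‖a‖⁻¹ * ‖a - b‖ := by
  have ha' : 0 < ‖a‖ := norm_pos_iff.2 ha
  have hb' : 0 < ‖b‖ := norm_pos_iff.2 hb
  have h1 : ‖a‖⁻¹ • a - ‖b‖⁻¹ • b = ‖a‖⁻¹ • (a - b) + (‖a‖⁻¹ - ‖b‖⁻¹) • b := by
    rw [smul_sub, sub_smul]; abel
  have h2 : ‖(‖a‖⁻¹ - ‖b‖⁻¹) • b‖ = ‖a‖⁻¹ * |‖b‖ - ‖a‖| := by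
    rw [norm_smul, Real.norm_eq_abs]
    have : ‖a‖⁻¹ - ‖b‖⁻¹ = ‖a‖⁻¹ * ‖b‖⁻¹ * (‖b‖ - ‖a‖) := by
      field_simp
    rw [this, abs_mul, abs_of_pos (by positivity : 0 < ‖a‖⁻¹ * ‖b‖⁻¹)]
    field_simp
  have h3 : |‖b‖ - ‖a‖| ≤ ‖a - b‖ := by
    rw [abs_sub_comm]; exact abs_norm_sub_norm_le a b
  calc _ ≤ ‖‖a‖⁻¹ • (a - b)‖ + ‖(‖a‖⁻¹ - ‖b‖⁻¹) • b‖ := by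
        rw [h1]; exact norm_add_le _ _
    _ ≤ ‖a‖⁻¹ * ‖a - b‖ + ‖a‖⁻¹ * ‖a - b‖ := by
        rw [h2, norm_smul, norm_inv, norm_norm]
        gcongr
    _ = _ := by ring

theorem aux_embed {K : Type*} [MetricSpace K] [CompactSpace K]
    (X : Type*) [NormedAddCommGroup X] [NormedSpace ℝ X] [FiniteDimensional ℝ X]
    (ψ : K → StrongDual ℝ X) (C : ℝ) (hC : 0 ≤ C)
    (hψ : ∀ s t, ‖ψ s - ψ t‖ ≤ C * dist s t) (h1 : ∀ t, ‖ψ t‖ ≤ 1)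
    (h2 : ∀ x : X, ∃ t, |ψ t x| = ‖x‖) :
    ∃ J : X →L[ℝ] C(K, ℝ), (∀ x : X, ‖J x‖ = ‖x‖) ∧
          (∀ x : X, ∃ L ≥ 0, ∀ t₁ t₂ : K, |J x t₁ - J x t₂| ≤ L * dist t₁ t₂) := by
  have hl : LipschitzWith C.toNNReal ψ := LipschitzWith.of_dist_le_mul fun s t => by
    rw [dist_eq_norm, Real.coe_toNNReal _ hC]; exact hψ s t
  have hc : Continuous ψ := hl.continuous
  let J0 : X →ₗ[ℝ] C(K, ℝ) :=
    { toFun := fun x => ⟨fun t => ψ t x, by fun_prop⟩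
      map_add' := fun x y => by ext t; simp
      map_smul' := fun c x => by ext t; simp }
  refine ⟨LinearMap.toContinuousLinearMap J0, fun x => ?_, fun x => ?_⟩
  · change ‖J0 x‖ = ‖x‖
    apply le_antisymm
    · rw [ContinuousMap.norm_le _ (norm_nonneg x)]
      intro t
      calc ‖ψ t x‖ ≤ ‖ψ t‖ * ‖x‖ := (ψ t).le_opNorm x
        _ ≤ 1 * ‖x‖ := by gcongr; exact h1 t
        _ = ‖x‖ := one_mul _
    · obtain ⟨t, ht⟩ := h2 x
      rw [← ht]
      exact (J0 x).norm_coe_le_norm t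
  · refine ⟨C * ‖x‖, by positivity, fun s t => ?_⟩
    change |ψ s x - ψ t x| ≤ _
    calc |ψ s x - ψ t x| = ‖(ψ s - ψ t) x‖ := by simp
      _ ≤ ‖ψ s - ψ t‖ * ‖x‖ := (ψ s - ψ t).le_opNorm x
      _ ≤ (C * dist s t) * ‖x‖ := by gcongr; exact hψ s t
      _ = _ := by ring

theorem aux_one_two {K : Type*} [MetricSpace K] [CompactSpace K] (n : ℕ)
    (φ : K → EuclideanSpace ℝ (Fin n)) (C : NNReal) (hφ : LipschitzWith C φ)
    (hr : Set.range φ = {x : EuclideanSpace ℝ (Fin n) | ∀ i, x i ∈ Set.Icc (0 : ℝ) 1})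
    (X : Type*) [NormedAddCommGroup X] [NormedSpace ℝ X] [FiniteDimensional ℝ X]
    (hX : Module.finrank ℝ X = n + 1) :
    ∃ J : X →L[ℝ] C(K, ℝ), (∀ x : X, ‖J x‖ = ‖x‖) ∧
          (∀ x : X, ∃ L ≥ 0, ∀ t₁ t₂ : K, |J x t₁ - J x t₂| ≤ L * dist t₁ t₂) := by
  have hY : Module.finrank ℝ (ℝ × (Fin n → ℝ)) = Module.finrank ℝ (StrongDual ℝ X) := by
    have h1 : Module.finrank ℝ (StrongDual ℝ X) = Module.finrank ℝ (Module.Dual ℝ X) :=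
      (LinearMap.toContinuousLinearMap (𝕜 := ℝ) (E := X) (F' := ℝ)).symm.finrank_eq
    rw [h1, Subspace.dual_finrank_eq, hX]
    simp [add_comm]
  let e : (ℝ × (Fin n → ℝ)) ≃L[ℝ] StrongDual ℝ X := ContinuousLinearEquiv.ofFinrankEq hY
  let u : K → Fin n → ℝ := fun t i => 2 * φ t i - 1
  have hu : ∀ s t, ‖u s - u t‖ ≤ 2 * C * dist s t := by
    intro s t
    rw [pi_norm_le_iff_of_nonneg (by positivity)]
    intro i
    have h1 : ‖φ s i - φ t i‖ ≤ ‖φ s - φ t‖ := PiLp.norm_apply_le (φ s - φ t) i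
    have h2 := hφ.dist_le_mul s t
    rw [dist_eq_norm] at h2
    have h3 : (u s - u t) i = 2 * (φ s i - φ t i) := by simp [u]; ring
    rw [h3, norm_mul, Real.norm_ofNat]
    linarith
  have hu1 : ∀ t, ‖u t‖ ≤ 1 := by
    intro t
    rw [pi_norm_le_iff_of_nonneg zero_le_one]
    intro i
    have : φ t ∈ {x : EuclideanSpace ℝ (Fin n) | ∀ i, x i ∈ Set.Icc (0 : ℝ) 1} := by
      rw [← hr]; exact ⟨t, rfl⟩
    have h := this i
    rw [Real.norm_eq_abs, abs_le]
    constructor <;> simp only [u] <;> linarith [h.1, h.2]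
  let p : K → ℝ × (Fin n → ℝ) := fun t => (1 - ‖u t‖, u t)
  have hp : ∀ s t, ‖p s - p t‖ ≤ 2 * C * dist s t := by
    intro s t
    rw [Prod.norm_def]
    apply max_le
    · have : (p s - p t).1 = ‖u t‖ - ‖u s‖ := by simp [p]
      rw [this, Real.norm_eq_abs, abs_sub_comm]
      exact (abs_norm_sub_norm_le _ _).trans (hu s t)
    · exact hu s t
  have hp1 : ∀ t, 1 / 2 ≤ ‖p t‖ := by
    intro t
    have h1 : 1 - ‖u t‖ ≤ ‖p t‖ := (le_abs_self _).trans (norm_fst_le (p t))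
    have h2 : ‖u t‖ ≤ ‖p t‖ := norm_snd_le (p t)
    linarith
  let M : ℝ := ‖(e.symm : StrongDual ℝ X →L[ℝ] (ℝ × (Fin n → ℝ)))‖
  let N : ℝ := ‖(e : (ℝ × (Fin n → ℝ)) →L[ℝ] StrongDual ℝ X)‖
  have hne : ∀ t, e (p t) ≠ 0 := by
    intro t h
    have : p t = 0 := by simpa using h
    have h2 := hp1 t
    rw [this, norm_zero] at h2
    linarith
  have hinv : ∀ t, ‖e (p t)‖⁻¹ ≤ 2 * M := by
    intro t
    have h0 : 0 < ‖e (p t)‖ := norm_pos_iff.2 (hne t)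
    have h1 : ‖p t‖ ≤ M * ‖e (p t)‖ := by
      have := (e.symm : StrongDual ℝ X →L[ℝ] (ℝ × (Fin n → ℝ))).le_opNorm (e (p t))
      simpa using this
    rw [inv_le_iff_one_le_mul₀ h0]
    linarith [hp1 t]
  have hM : 0 ≤ M := by
    simp only [M]; positivity
  have hN : 0 ≤ N := by
    simp only [N]; positivity
  refine aux_embed X (fun t => ‖e (p t)‖⁻¹ • e (p t)) (2 * (2 * M) * (N * (2 * C)))
    (by positivity) ?_ ?_ ?_
  · intro s t
    calc _ ≤ 2 * ‖e (p s)‖⁻¹ * ‖e (p s) - e (p t)‖ := aux_normalize _ _ (hne s) (hne t)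
      _ ≤ 2 * (2 * M) * (N * (2 * C * dist s t)) := by
        gcongr
        · exact hinv s
        · rw [← map_sub]
          refine ((e : (ℝ × (Fin n → ℝ)) →L[ℝ] StrongDual ℝ X).le_opNorm _).trans ?_
          gcongr
          exact hp s t
      _ = _ := by ring
  · intro t
    rw [norm_smul, norm_inv, norm_norm, inv_mul_cancel₀ (norm_ne_zero_iff.2 (hne t))]
  · intro x
    have : Nontrivial X := Module.nontrivial_of_finrank_pos (R := ℝ) (by omega)
    -- a norming functional, up to sign in the upper half
    obtain ⟨f, hf1, hf2, hf3⟩ : ∃ f : StrongDual ℝ X, ‖f‖ = 1 ∧ |f x| = ‖x‖ ∧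
        0 ≤ (e.symm f).1 := by
      obtain ⟨f, hf1, hf2⟩ := exists_dual_vector' ℝ x
      have hf2 : f x = ‖x‖ := by simpa using hf2
      rcases le_total 0 (e.symm f).1 with h | h
      · exact ⟨f, hf1, by rw [hf2, abs_norm], h⟩
      · refine ⟨-f, by rw [norm_neg, hf1], by simp [hf2], ?_⟩
        rw [map_neg]; simpa using h
    set q := e.symm f with hq
    have hfq : e q = f := by simp [hq]
    have hr0 : 0 < q.1 + ‖q.2‖ := by
      rcases lt_or_eq_of_le (add_nonneg hf3 (norm_nonneg q.2)) with h | h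
      · exact h
      · exfalso
        have h1 : q.1 = 0 := by linarith [norm_nonneg q.2]
        have h2 : q.2 = 0 := norm_eq_zero.1 (by linarith [norm_nonneg q.2])
        have h3 : q = 0 := Prod.ext h1 h2
        rw [h3, map_zero] at hfq
        rw [← hfq, norm_zero] at hf1
        exact zero_ne_one hf1
    set r := q.1 + ‖q.2‖ with hrdef
    let v : Fin n → ℝ := r⁻¹ • q.2
    have hvn : ‖v‖ = r⁻¹ * ‖q.2‖ := by
      simp only [v]
      rw [norm_smul, norm_inv, Real.norm_eq_abs, abs_of_pos hr0]
    have hv : ‖v‖ ≤ 1 := by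
      rw [hvn, inv_mul_le_iff₀ hr0]; linarith
    have hmem : WithLp.toLp 2 (fun i => (v i + 1) / 2) ∈ Set.range φ := by
      rw [hr]
      intro i
      have := (norm_le_pi_norm v i).trans hv
      rw [Real.norm_eq_abs, abs_le] at this
      constructor
      · change 0 ≤ (v i + 1) / 2
        linarith
      · change (v i + 1) / 2 ≤ 1
        linarith
    obtain ⟨t, ht⟩ := hmem
    have hut : u t = v := by
      funext i
      simp only [u, ht]
      ring
    have hpt : p t = r⁻¹ • q := by
      apply Prod.ext
      · change 1 - ‖u t‖ = r⁻¹ * q.1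
        rw [hut, hvn]
        have : q.1 = r - ‖q.2‖ := by rw [hrdef]; ring
        rw [this]
        field_simp
      · exact hut
    have hept : e (p t) = r⁻¹ • f := by rw [hpt, map_smul, hfq]
    refine ⟨t, ?_⟩
    have : ‖e (p t)‖⁻¹ • e (p t) = f := by
      rw [hept, norm_smul, hf1, norm_inv, Real.norm_eq_abs, abs_of_pos hr0, smul_smul]
      have : (r⁻¹ * 1)⁻¹ * r⁻¹ = 1 := by field_simp
      rw [this, one_smul]
    simp only [this]
    exact hf2

theorem aux_three_one {K : Type*} [MetricSpace K] [CompactSpace K] (n : ℕ)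
    (J : EuclideanSpace ℝ (Fin (n + 1)) →L[ℝ] C(K, ℝ))
    (hJ : ∀ x : EuclideanSpace ℝ (Fin (n + 1)), ‖J x‖ = ‖x‖)
    (hL : ∀ x : EuclideanSpace ℝ (Fin (n + 1)),
          ∃ L ≥ 0, ∀ t₁ t₂ : K, |J x t₁ - J x t₂| ≤ L * dist t₁ t₂) :
    ∃ φ : K → EuclideanSpace ℝ (Fin n), (∃ C : NNReal, LipschitzWith C φ) ∧
        Set.range φ = {x : EuclideanSpace ℝ (Fin n) | ∀ i, x i ∈ Set.Icc (0 : ℝ) 1} := by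
  let b : Fin (n + 1) → EuclideanSpace ℝ (Fin (n + 1)) := fun i => EuclideanSpace.single i 1
  let ψ : K → EuclideanSpace ℝ (Fin (n + 1)) := fun t => WithLp.toLp 2 (fun i => J (b i) t)
  have hin : ∀ x t, J x t = inner ℝ (ψ t) x := by
    intro x t
    have hx : x = ∑ i, x i • b i := by
      ext j
      simp [b, Finset.sum_apply, Pi.single_apply]
    have h1 : J x t = ∑ i, x i * J (b i) t := by
      conv_lhs => rw [hx]
      simp [map_sum]
    rw [h1, PiLp.inner_apply]
    rfl
  have hψ1 : ∀ t, ‖ψ t‖ ≤ 1 := by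
    intro t
    have h1 := (J (ψ t)).norm_coe_le_norm t
    rw [hJ, hin, real_inner_self_eq_norm_sq, Real.norm_eq_abs, abs_of_nonneg (by positivity)] at h1
    nlinarith [norm_nonneg (ψ t)]
  have hne : Nonempty K := by
    by_contra h
    rw [not_nonempty_iff] at h
    have h1 := hJ (b 0)
    have h2 : J (b 0) = 0 := by ext t; exact h.elim t
    rw [h2] at h1
    simp [b] at h1
  have hsurj : ∀ x, ‖x‖ = 1 → ∃ t, ψ t = x ∨ ψ t = -x := by
    intro x hx
    obtain ⟨t, -, ht⟩ := isCompact_univ.exists_isMaxOn (Set.univ_nonempty (α := K))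
      ((J x).continuous.norm.continuousOn)
    have h1 : ‖J x‖ ≤ ‖J x t‖ := by
      rw [ContinuousMap.norm_le _ (norm_nonneg _)]
      intro s
      exact ht (Set.mem_univ s)
    rw [hJ, hx, hin, Real.norm_eq_abs] at h1
    have h2 := hψ1 t
    refine ⟨t, ?_⟩
    rcases le_abs.1 h1 with h | h
    · left
      have h3 : ‖ψ t - x‖ ^ 2 ≤ 0 := by
        rw [norm_sub_sq_real, hx]
        nlinarith [norm_nonneg (ψ t)]
      have h4 : ‖ψ t - x‖ = 0 := by nlinarith [norm_nonneg (ψ t - x)]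
      exact sub_eq_zero.1 (norm_eq_zero.1 h4)
    · right
      have h3 : ‖ψ t + x‖ ^ 2 ≤ 0 := by
        rw [norm_add_sq_real, hx]
        nlinarith [norm_nonneg (ψ t)]
      have h4 : ‖ψ t + x‖ = 0 := by nlinarith [norm_nonneg (ψ t + x)]
      exact eq_neg_of_add_eq_zero_left (norm_eq_zero.1 h4)
  choose L hL0 hL1 using fun i : Fin n => hL (b i.succ)
  let φ : K → EuclideanSpace ℝ (Fin n) :=
    fun t => WithLp.toLp 2 (fun i => min 1 ((n + 1 : ℝ) * |ψ t i.succ|))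
  refine ⟨φ, ⟨(∑ i, (n + 1 : ℝ) * L i).toNNReal, ?_⟩, ?_⟩
  · refine LipschitzWith.of_dist_le_mul fun s t => ?_
    rw [Real.coe_toNNReal _ (Finset.sum_nonneg fun i _ => mul_nonneg (by positivity) (hL0 i))]
    rw [EuclideanSpace.dist_eq, Finset.sum_mul]
    have hd : ∀ i, dist (φ s i) (φ t i) ≤ (n + 1 : ℝ) * L i * dist s t := by
      intro i
      rw [Real.dist_eq]
      change |min 1 ((n + 1 : ℝ) * |J (b i.succ) s|) - min 1 ((n + 1 : ℝ) * |J (b i.succ) t|)| ≤ _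
      have h0 : (0 : ℝ) < n + 1 := by positivity
      calc _ ≤ |((n + 1 : ℝ) * |J (b i.succ) s|) - ((n + 1 : ℝ) * |J (b i.succ) t|)| := by
            refine (abs_min_sub_min_le_max _ _ _ _).trans ?_
            simp
        _ = (n + 1 : ℝ) * |(|J (b i.succ) s| - |J (b i.succ) t|)| := by
            rw [← mul_sub, abs_mul, abs_of_pos h0]
        _ ≤ (n + 1 : ℝ) * (L i * dist s t) := by
            gcongr
            exact (abs_abs_sub_abs_le _ _).trans (hL1 i s t)
        _ = _ := by ring
    have hnn : ∀ i, 0 ≤ (n + 1 : ℝ) * L i * dist s t := fun i =>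
      mul_nonneg (mul_nonneg (by positivity) (hL0 i)) dist_nonneg
    apply Real.sqrt_le_iff.2 ⟨Finset.sum_nonneg fun i _ => hnn i, ?_⟩
    calc _ ≤ ∑ i, ((n + 1 : ℝ) * L i * dist s t) ^ 2 := by
          gcongr with i
          exact hd i
      _ ≤ _ := Finset.sum_sq_le_sq_sum_of_nonneg fun i _ => hnn i
  · apply Set.Subset.antisymm
    · rintro _ ⟨t, rfl⟩ i
      constructor
      · change 0 ≤ min 1 ((n + 1 : ℝ) * |ψ t i.succ|)
        positivity
      · exact min_le_left _ _
    · intro c hc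
      have h0 : (0 : ℝ) < n + 1 := by positivity
      have hsum : ∑ i : Fin n, (c i / (n + 1 : ℝ)) ^ 2 ≤ 1 := by
        calc _ ≤ ∑ i : Fin n, (1 / (n + 1 : ℝ)) := by
              refine Finset.sum_le_sum fun i _ => ?_
              have h1 := (hc i).1
              have h2 := (hc i).2
              have h3 : c i / (n + 1 : ℝ) ≤ 1 / (n + 1 : ℝ) := by gcongr
              have h4 : 0 ≤ c i / (n + 1 : ℝ) := by positivity
              have h5 : 1 / (n + 1 : ℝ) ≤ 1 := by
                rw [div_le_one h0]; linarith [(Nat.cast_nonneg n : (0 : ℝ) ≤ n)]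
              nlinarith
          _ = n / (n + 1 : ℝ) := by simp [div_eq_mul_inv]
          _ ≤ 1 := by rw [div_le_one h0]; linarith
      let x : EuclideanSpace ℝ (Fin (n + 1)) := WithLp.toLp 2
        (Fin.cons (Real.sqrt (1 - ∑ i : Fin n, (c i / (n + 1 : ℝ)) ^ 2))
          (fun i => c i / (n + 1 : ℝ)))
      have hx : ‖x‖ = 1 := by
        rw [EuclideanSpace.norm_eq, Fin.sum_univ_succ]
        simp only [x, Fin.cons_zero, Fin.cons_succ, Real.norm_eq_abs, sq_abs]
        rw [Real.sq_sqrt (by linarith)]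
        simp
      obtain ⟨t, ht⟩ := hsurj x hx
      refine ⟨t, ?_⟩
      ext i
      change min 1 ((n + 1 : ℝ) * |ψ t i.succ|) = c i
      have habs : |ψ t i.succ| = |x i.succ| := by
        rcases ht with h | h <;> rw [h]
        simp
      have hxi : x i.succ = c i / (n + 1 : ℝ) := by simp [x]
      rw [habs, hxi, abs_of_nonneg (div_nonneg (hc i).1 h0.le), mul_div_cancel₀ _ h0.ne']
      exact min_eq_right (hc i).2

/-- Let `K` be a compact metric space and `n ∈ ℕ`. The following are
equivalent: (i) there is a surjective Lipschitz map `φ : K → [0,1]ⁿ` (Euclidean metric);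
(ii) every `(n+1)`-dimensional real normed space embeds linearly isometrically into `C(K)`
with `d`-Lipschitz range; (iii) the `(n+1)`-dimensional Euclidean space so embeds. -/
theorem lipschitz_cube_surjection_iff_embeddings
    {K : Type*} [MetricSpace K] [CompactSpace K] (n : ℕ) :
    ((∃ φ : K → EuclideanSpace ℝ (Fin n), (∃ C : NNReal, LipschitzWith C φ) ∧
        Set.range φ = {x : EuclideanSpace ℝ (Fin n) | ∀ i, x i ∈ Set.Icc (0 : ℝ) 1}) ↔
      (∀ (X : Type) [NormedAddCommGroup X] [NormedSpace ℝ X] [FiniteDimensional ℝ X],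
        Module.finrank ℝ X = n + 1 →
        ∃ J : X →L[ℝ] C(K, ℝ), (∀ x : X, ‖J x‖ = ‖x‖) ∧
          (∀ x : X, ∃ L ≥ 0, ∀ t₁ t₂ : K, |J x t₁ - J x t₂| ≤ L * dist t₁ t₂))) ∧
    ((∀ (X : Type) [NormedAddCommGroup X] [NormedSpace ℝ X] [FiniteDimensional ℝ X],
        Module.finrank ℝ X = n + 1 →
        ∃ J : X →L[ℝ] C(K, ℝ), (∀ x : X, ‖J x‖ = ‖x‖) ∧
          (∀ x : X, ∃ L ≥ 0, ∀ t₁ t₂ : K, |J x t₁ - J x t₂| ≤ L * dist t₁ t₂)) ↔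
      (∃ J : EuclideanSpace ℝ (Fin (n + 1)) →L[ℝ] C(K, ℝ),
        (∀ x : EuclideanSpace ℝ (Fin (n + 1)), ‖J x‖ = ‖x‖) ∧
        (∀ x : EuclideanSpace ℝ (Fin (n + 1)),
          ∃ L ≥ 0, ∀ t₁ t₂ : K, |J x t₁ - J x t₂| ≤ L * dist t₁ t₂))) := by
  have h12 : (∃ φ : K → EuclideanSpace ℝ (Fin n), (∃ C : NNReal, LipschitzWith C φ) ∧
        Set.range φ = {x : EuclideanSpace ℝ (Fin n) | ∀ i, x i ∈ Set.Icc (0 : ℝ) 1}) →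
      (∀ (X : Type) [NormedAddCommGroup X] [NormedSpace ℝ X] [FiniteDimensional ℝ X],
        Module.finrank ℝ X = n + 1 →
        ∃ J : X →L[ℝ] C(K, ℝ), (∀ x : X, ‖J x‖ = ‖x‖) ∧
          (∀ x : X, ∃ L ≥ 0, ∀ t₁ t₂ : K, |J x t₁ - J x t₂| ≤ L * dist t₁ t₂)) := by
    rintro ⟨φ, ⟨C, hC⟩, hr⟩ X _ _ _ hX
    exact aux_one_two n φ C hC hr X hX
  refine ⟨⟨h12, fun h => ?_⟩, fun h => ?_, ?_⟩
  · obtain ⟨J, h1, h2⟩ := h (EuclideanSpace ℝ (Fin (n + 1))) (by simp)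
    exact aux_three_one n J h1 h2
  · exact h (EuclideanSpace ℝ (Fin (n + 1))) (by simp)
  · rintro ⟨J, h1, h2⟩
    exact h12 (aux_three_one n J h1 h2)
end

section
/- The following are equivalent: (i) K is not fragmented by d; (ii) there exists a linear isometric embedding of ℓ₁ (the Banach space of absolutely summable real sequences with the ℓ₁ norm) into C(K) whose range consists of d-Lipschitz functions; (iii) there exists an isomorphic embedding (a bounded linear map which is bounded below) of ℓ₁ into C(K) whose range consists of d-Lipschitz functions. -/
namespace FragL1
open Set Filter Topology

lemma closed_thick {K : Type*} [TopologicalSpace K] [CompactSpace K]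
    (d : K → K → ℝ) (hd_lsc : LowerSemicontinuous fun p : K × K => d p.1 p.2)
    (C : Set K) (hC : IsClosed C) (s : ℝ) : IsClosed {x | ∃ y ∈ C, d x y ≤ s} := by
  have h1 : IsClosed {p : K × K | p.2 ∈ C ∧ d p.1 p.2 ≤ s} :=
    (hC.preimage continuous_snd).inter (hd_lsc.isClosed_preimage s)
  have h2 := isClosedMap_fst_of_compactSpace _ h1
  convert h2 using 1
  ext x
  simp only [mem_ofPred_eq, mem_image, Prod.exists, exists_and_right, exists_eq_right]

/-- good families of triples -/
def Good {K : Type*} [TopologicalSpace K] (d : K → K → ℝ) (S : Set (ℝ × Set K × Set K)) : Prop :=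
  (∀ a ∈ S, IsClosed a.2.1 ∧ IsClosed a.2.2 ∧ a.2.1 ∪ a.2.2 = univ) ∧
  ∀ a ∈ S, ∀ b ∈ S, a.1 < b.1 → ∀ x ∈ a.2.1, ∀ y ∈ b.2.2, b.1 - a.1 < d x y

lemma good_insert {K : Type*} [TopologicalSpace K] [CompactSpace K] [T2Space K]
    (d : K → K → ℝ)
    (hd_symm : ∀ x y, d x y = d y x)
    (hd_tri : ∀ x y z, d x z ≤ d x y + d y z)
    (hd_lsc : LowerSemicontinuous fun p : K × K => d p.1 p.2)
    (S : Set (ℝ × Set K × Set K)) (hS : S.Finite) (hG : Good d S) (q : ℝ) :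
    ∃ C D, Good d (insert (q, C, D) S) := by
  obtain ⟨hG1, hG2⟩ := hG
  let F1 : Set K := ⋃ a ∈ {a ∈ S | a.1 < q}, {x | ∃ y ∈ a.2.1, d x y ≤ q - a.1}
  let H1 : Set K := ⋃ a ∈ {a ∈ S | q < a.1}, {x | ∃ y ∈ a.2.2, d x y ≤ a.1 - q}
  have hF1 : IsClosed F1 := (hS.subset (sep_subset _ _)).isClosed_biUnion
    fun a ha => closed_thick d hd_lsc _ (hG1 a ha.1).1 _
  have hH1 : IsClosed H1 := (hS.subset (sep_subset _ _)).isClosed_biUnion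
    fun a ha => closed_thick d hd_lsc _ (hG1 a ha.1).2.1 _
  have hdisj : Disjoint F1 H1 := by
    rw [Set.disjoint_left]
    intro x hx hx'
    simp only [F1, H1, mem_iUnion, mem_ofPred_eq, exists_prop] at hx hx'
    obtain ⟨a, ⟨ha, haq⟩, y, hy, hxy⟩ := hx
    obtain ⟨b, ⟨hb, hbq⟩, z, hz, hxz⟩ := hx'
    have h1 := hG2 a ha b hb (haq.trans hbq) y hy z hz
    have h2 := hd_tri y x z
    rw [hd_symm y x] at h2
    linarith
  obtain ⟨V, W, hV, hW, hFV, hHW, hVW⟩ := normal_separation hF1 hH1 hdisj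
  refine ⟨Wᶜ, Vᶜ, ?_, ?_⟩
  · intro a ha
    rcases ha with rfl | ha
    · refine ⟨hW.isClosed_compl, hV.isClosed_compl, ?_⟩
      simp only
      rw [← compl_inter, inter_comm, hVW.inter_eq, compl_empty]
    · exact hG1 a ha
  · intro a ha b hb hab x hx y hy
    rcases ha with rfl | ha <;> rcases hb with rfl | hb
    · exact absurd hab (lt_irrefl _)
    · by_contra hcon
      push Not at hcon
      apply hx
      apply hHW
      simp only [H1, mem_iUnion, mem_ofPred_eq, exists_prop]
      exact ⟨b, ⟨hb, hab⟩, y, hy, hcon⟩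
    · by_contra hcon
      push Not at hcon
      apply hy
      apply hFV
      simp only [F1, mem_iUnion, mem_ofPred_eq, exists_prop]
      exact ⟨a, ⟨ha, hab⟩, x, hx, by rw [hd_symm]; exact hcon⟩
    · exact hG2 a ha b hb hab x hx y hy

lemma exists_scale {K : Type*} [TopologicalSpace K] [CompactSpace K] [T2Space K]
    (d : K → K → ℝ)
    (hd_symm : ∀ x y, d x y = d y x)
    (hd_tri : ∀ x y z, d x z ≤ d x y + d y z)
    (hd_lsc : LowerSemicontinuous fun p : K × K => d p.1 p.2)
    (F H : Set K) (hF : IsClosed F) (hH : IsClosed H) (r : ℝ)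
    (hFH : ∀ x ∈ F, ∀ y ∈ H, r < d x y) (hr : 0 < r) (q : ℕ → ℝ) :
    ∃ S : Set (ℝ × Set K × Set K), Good d S ∧ (0, F, univ) ∈ S ∧ (r, univ, H) ∈ S ∧
      ∀ n, ∃ C D, (q n, C, D) ∈ S := by
  let S0 : Set (ℝ × Set K × Set K) := {(0, F, univ), (r, univ, H)}
  have hS0 : Good d S0 := by
    constructor
    · rintro a (rfl | rfl) <;> simp [hF, hH]
    · rintro a (rfl | rfl) b (rfl | rfl) hab x hx y hy
      · exact absurd hab (lt_irrefl _)
      · simpa using hFH x hx y hy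
      · exact absurd hab (not_lt.2 hr.le)
      · exact absurd hab (lt_irrefl _)
  have key : ∀ n : ℕ, ∀ S : {S : Set (ℝ × Set K × Set K) // S.Finite ∧ Good d S},
      ∃ S' : {S : Set (ℝ × Set K × Set K) // S.Finite ∧ Good d S},
        S.1 ⊆ S'.1 ∧ ∃ C D, (q n, C, D) ∈ S'.1 := by
    rintro n ⟨S, hS, hG⟩
    obtain ⟨C, D, h⟩ := good_insert d hd_symm hd_tri hd_lsc S hS hG (q n)
    exact ⟨⟨_, hS.insert _, h⟩, subset_insert _ _, C, D, mem_insert _ _⟩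
  choose nxt hn1 hn2 using key
  let seq : ℕ → {S : Set (ℝ × Set K × Set K) // S.Finite ∧ Good d S} := fun n =>
    Nat.rec ⟨S0, (by simp [S0]), hS0⟩ (fun n S => nxt n S) n
  have hmono : Monotone fun n => (seq n).1 := monotone_nat_of_le_succ fun n => hn1 n (seq n)
  refine ⟨⋃ n, (seq n).1, ⟨?_, ?_⟩, ?_, ?_, ?_⟩
  · intro a ha
    obtain ⟨n, hn⟩ := mem_iUnion.1 ha
    exact (seq n).2.2.1 a hn
  · intro a ha b hb
    obtain ⟨n, hn⟩ := mem_iUnion.1 ha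
    obtain ⟨m, hm⟩ := mem_iUnion.1 hb
    exact (seq (max n m)).2.2.2 a (hmono (le_max_left n m) hn) b (hmono (le_max_right n m) hm)
  · exact mem_iUnion.2 ⟨0, by simp [seq, S0]⟩
  · exact mem_iUnion.2 ⟨0, by simp [seq, S0]⟩
  · intro n
    obtain ⟨C, D, h⟩ := hn2 n (seq n)
    exact ⟨C, D, mem_iUnion.2 ⟨n + 1, h⟩⟩

lemma lip_urysohn {K : Type*} [TopologicalSpace K] [CompactSpace K] [T2Space K]
    (d : K → K → ℝ)
    (hd_nonneg : ∀ x y, 0 ≤ d x y)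
    (hd_symm : ∀ x y, d x y = d y x)
    (hd_eq : ∀ x y, d x y = 0 ↔ x = y)
    (hd_tri : ∀ x y z, d x z ≤ d x y + d y z)
    (hd_lsc : LowerSemicontinuous fun p : K × K => d p.1 p.2)
    (F H : Set K) (hF : IsClosed F) (hH : IsClosed H) (r : ℝ)
    (hFH : ∀ x ∈ F, ∀ y ∈ H, r < d x y) (hr : 0 < r) :
    ∃ g : C(K, ℝ), (∀ x ∈ F, g x ≤ 0) ∧ (∀ x ∈ H, r ≤ g x) ∧
      ∀ x y, |g x - g y| ≤ d x y := by
  have hself : ∀ x, d x x = 0 := fun x => (hd_eq x x).2 rfl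
  obtain ⟨q, hq⟩ : ∃ q : ℕ → ℝ, {x : ℝ | ∃ p : ℚ, (p : ℝ) = x ∧ 0 < x ∧ x < r} = range q := by
    apply Set.Countable.exists_eq_range
    · exact (countable_range (fun p : ℚ => (p : ℝ))).mono (by rintro x ⟨p, hp, -⟩; exact ⟨p, hp⟩)
    · obtain ⟨p, hp1, hp2⟩ := exists_rat_btwn hr
      exact ⟨p, p, rfl, hp1, hp2⟩
  have hq0 : ∀ n, 0 < q n ∧ q n < r := fun n => by
    have : q n ∈ range q := ⟨n, rfl⟩
    rw [← hq] at this
    obtain ⟨p, -, h⟩ := this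
    exact h
  have hqd : ∀ a b, 0 ≤ a → a < b → b ≤ r → ∃ n, a < q n ∧ q n < b := by
    intro a b ha hab hb
    obtain ⟨p, hp1, hp2⟩ := exists_rat_btwn hab
    have : (p : ℝ) ∈ range q := by
      rw [← hq]; exact ⟨p, rfl, by linarith, by linarith⟩
    obtain ⟨n, hn⟩ := this
    exact ⟨n, by rw [hn]; exact ⟨hp1, hp2⟩⟩
  obtain ⟨S, ⟨hG1, hG2⟩, hSF, hSH, hS⟩ :=
    exists_scale d hd_symm hd_tri hd_lsc F H hF hH r hFH hr q
  choose C D hCD using hS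
  have hCc : ∀ n, IsClosed (C n) := fun n => (hG1 _ (hCD n)).1
  have hDc : ∀ n, IsClosed (D n) := fun n => (hG1 _ (hCD n)).2.1
  have hU : ∀ n x, x ∉ C n → x ∈ D n := fun n x hx => by
    have : x ∈ C n ∪ D n := by rw [(hG1 _ (hCD n)).2.2]; trivial
    exact this.resolve_left hx
  have hP : ∀ i j, q i < q j → ∀ x ∈ C i, ∀ y ∈ D j, q j - q i < d x y := fun i j h =>
    hG2 _ (hCD i) _ (hCD j) h
  have hPF : ∀ j, ∀ x ∈ F, ∀ y ∈ D j, q j < d x y := fun j x hx y hy => by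
    simpa using hG2 _ hSF _ (hCD j) (hq0 j).1 x hx y hy
  have hPH : ∀ j, ∀ x ∈ C j, ∀ y ∈ H, r - q j < d x y := fun j x hx y hy => by
    simpa using hG2 _ (hCD j) _ hSH (hq0 j).2 x hx y hy
  classical
  let τ : K → ℕ → ℝ := fun x n => if x ∈ C n then 0 else q n
  have hτr : ∀ x n, τ x n ≤ r := fun x n => by
    simp only [τ]; split_ifs
    · exact hr.le
    · exact (hq0 n).2.le
  have hτ0 : ∀ x n, 0 ≤ τ x n := fun x n => by
    simp only [τ]; split_ifs
    · exact le_rfl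
    · exact (hq0 n).1.le
  have hbdd : ∀ x, BddAbove (range (τ x)) := fun x => ⟨r, by rintro _ ⟨n, rfl⟩; exact hτr x n⟩
  let f : K → ℝ := fun x => ⨆ n, τ x n
  have hle : ∀ x n, τ x n ≤ f x := fun x n => le_ciSup (hbdd x) n
  have hf0 : ∀ x, 0 ≤ f x := fun x => (hτ0 x 0).trans (hle x 0)
  have hfr : ∀ x, f x ≤ r := fun x => ciSup_le (hτr x)
  have hmemC : ∀ x n, f x < q n → x ∈ C n := by
    intro x n h
    by_contra hx
    have := hle x n
    simp only [τ, if_neg hx] at this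
    linarith
  have hlip : ∀ x y, f y ≤ f x + d x y := by
    intro x y
    refine ciSup_le fun j => ?_
    simp only [τ]
    split_ifs with hy
    · exact add_nonneg (hf0 x) (hd_nonneg x y)
    · by_contra hcon
      push Not at hcon
      obtain ⟨i, hi1, hi2⟩ := hqd (f x) (q j - d x y) (hf0 x) (by linarith)
        (by linarith [(hq0 j).2, hd_nonneg x y])
      have := hP i j (by linarith [hd_nonneg x y]) x (hmemC x i hi1) y (hU j y hy)
      linarith
  have hCup : ∀ j y, y ∈ C j → f y ≤ q j := by
    intro j y hy
    refine ciSup_le fun k => ?_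
    simp only [τ]
    split_ifs with hk
    · exact (hq0 j).1.le
    · by_contra hcon
      push Not at hcon
      have := hP j k hcon y hy y (hU k y hk)
      rw [hself] at this
      linarith
  have hcont : Continuous f := by
    rw [continuous_iff_lower_upperSemicontinuous]
    constructor
    · intro x a ha
      obtain ⟨n, hn⟩ := exists_lt_of_lt_ciSup ha
      by_cases hx : x ∈ C n
      · simp only [τ, if_pos hx] at hn
        exact Eventually.of_forall fun y => hn.trans_le (hf0 y)
      · simp only [τ, if_neg hx] at hn
        filter_upwards [(hCc n).isOpen_compl.mem_nhds hx] with y hy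
        have := hle y n
        simp only [τ, if_neg hy] at this
        linarith
    · intro x a ha
      rcases lt_or_ge r a with hra | hra
      · exact Eventually.of_forall fun y => (hfr y).trans_lt hra
      · obtain ⟨j, hj1, hj2⟩ := hqd (f x) a (hf0 x) ha hra
        obtain ⟨i, hi1, hi2⟩ := hqd (f x) (q j) (hf0 x) hj1 (hq0 j).2.le
        have hxD : x ∉ D j := fun h => by
          have := hP i j hi2 x (hmemC x i hi1) x h
          rw [hself] at this
          linarith
        filter_upwards [(hDc j).isOpen_compl.mem_nhds hxD] with y hy
        refine (hCup j y ?_).trans_lt hj2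
        by_contra h
        exact hy (hU j y h)
  refine ⟨⟨f, hcont⟩, ?_, ?_, ?_⟩
  · intro x hx
    refine ciSup_le fun n => ?_
    have : x ∈ C n := by
      by_contra h
      have := hPF n x hx x (hU n x h)
      rw [hself] at this
      linarith [(hq0 n).1]
    simp [τ, this]
  · intro x hx
    by_contra hcon
    push Not at hcon
    obtain ⟨n, hn1, hn2⟩ := hqd (f x) r (hf0 x) hcon le_rfl
    have := hPH n x (hmemC x n hn1) x hx
    rw [hself] at this
    linarith
  · intro x y
    simp only [ContinuousMap.coe_mk]
    rw [abs_le]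
    have h1 := hlip x y
    have h2 := hlip y x
    rw [hd_symm y x] at h2
    constructor <;> linarith

end FragL1

namespace FragL1
open Set Filter Topology

lemma far_point {K : Type*} [TopologicalSpace K]
    (d : K → K → ℝ)
    (hd_symm : ∀ x y, d x y = d y x)
    (hd_tri : ∀ x y z, d x z ≤ d x y + d y z)
    (hd_lsc : LowerSemicontinuous fun p : K × K => d p.1 p.2)
    (A : Set K) (r : ℝ)
    (hA : ∀ U, IsOpen U → (A ∩ U).Nonempty → ∃ x ∈ A ∩ U, ∃ y ∈ A ∩ U, 2 * r < d x y)
    (U : Set K) (hU : IsOpen U) (hAU : (A ∩ U).Nonempty) (Z : Set K) (hZ : Z.Finite) :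
    ∃ V ⊆ U, IsOpen V ∧ (A ∩ V).Nonempty ∧ ∀ x ∈ V, ∀ z ∈ Z, r < d z x := by
  induction Z, hZ using Set.Finite.induction_on with
  | empty => exact ⟨U, subset_rfl, hU, hAU, by simp⟩
  | @insert z Z _ _ ih =>
    obtain ⟨V, hVU, hV, hAV, h⟩ := ih
    have ho : IsOpen {x | r < d z x} := by
      have := hd_lsc.isOpen_preimage r
      exact this.preimage (Continuous.prodMk_right z)
    refine ⟨V ∩ {x | r < d z x}, inter_subset_left.trans hVU, hV.inter ho, ?_, ?_⟩
    · by_contra hne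
      obtain ⟨x, hx, y, hy, hxy⟩ := hA V hV hAV
      have hle : ∀ x ∈ A ∩ V, d z x ≤ r := fun x hx => by
        by_contra hcon
        push Not at hcon
        exact hne ⟨x, hx.1, hx.2, hcon⟩
      have h1 := hle x hx
      have h2 := hle y hy
      have h3 := hd_tri x z y
      rw [hd_symm x z] at h3
      linarith
    · rintro x ⟨hxV, hx⟩ w (rfl | hw)
      · exact hx
      · exact h x hxV w hw

lemma two_sets {K : Type*} [TopologicalSpace K]
    (d : K → K → ℝ)
    (hd_symm : ∀ x y, d x y = d y x)
    (hd_tri : ∀ x y z, d x z ≤ d x y + d y z)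
    (hd_lsc : LowerSemicontinuous fun p : K × K => d p.1 p.2)
    (A : Set K) (r : ℝ)
    (hA : ∀ U, IsOpen U → (A ∩ U).Nonempty → ∃ x ∈ A ∩ U, ∃ y ∈ A ∩ U, 2 * r < d x y)
    (T : Set (Set K)) (hT : T.Finite) (hTo : ∀ U ∈ T, IsOpen U ∧ (A ∩ U).Nonempty) :
    ∃ F H : Set K, F.Finite ∧ H.Finite ∧ (∀ x ∈ F, ∀ y ∈ H, r < d x y) ∧
      ∀ U ∈ T, (∃ x ∈ A ∩ U, x ∈ F) ∧ (∃ x ∈ A ∩ U, x ∈ H) := by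
  induction T, hT using Set.Finite.induction_on with
  | empty => exact ⟨∅, ∅, by simp, by simp, by simp, by simp⟩
  | @insert U T _ _ ih =>
    obtain ⟨F, H, hF, hH, hFH, h⟩ := ih fun V hV => hTo V (mem_insert_of_mem _ hV)
    obtain ⟨hU, hAU⟩ := hTo U (mem_insert _ _)
    obtain ⟨V, hVU, -, ⟨x, hxA, hxV⟩, hx⟩ :=
      far_point d hd_symm hd_tri hd_lsc A r hA U hU hAU H hH
    obtain ⟨W, hWU, -, ⟨y, hyA, hyW⟩, hy⟩ :=
      far_point d hd_symm hd_tri hd_lsc A r hA U hU hAU (insert x F) (hF.insert x)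
    refine ⟨insert x F, insert y H, hF.insert _, hH.insert _, ?_, ?_⟩
    · intro a ha b hb
      rcases hb with rfl | hb
      · exact hy _ hyW a ha
      · rcases ha with rfl | ha
        · rw [hd_symm]; exact hx _ hxV b hb
        · exact hFH a ha b hb
    · rintro V' (rfl | hV')
      · exact ⟨⟨x, ⟨hxA, hVU hxV⟩, mem_insert _ _⟩, ⟨y, ⟨hyA, hWU hyW⟩, mem_insert _ _⟩⟩
      · obtain ⟨⟨a, ha, ha'⟩, b, hb, hb'⟩ := h V' hV'
        exact ⟨⟨a, ha, mem_insert_of_mem _ ha'⟩, ⟨b, hb, mem_insert_of_mem _ hb'⟩⟩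

lemma tree_step {K : Type*} [TopologicalSpace K] [CompactSpace K] [T2Space K]
    (d : K → K → ℝ)
    (hd_nonneg : ∀ x y, 0 ≤ d x y)
    (hd_symm : ∀ x y, d x y = d y x)
    (hd_eq : ∀ x y, d x y = 0 ↔ x = y)
    (hd_tri : ∀ x y z, d x z ≤ d x y + d y z)
    (hd_lsc : LowerSemicontinuous fun p : K × K => d p.1 p.2)
    (A : Set K) (r : ℝ) (hr : 0 < r)
    (hA : ∀ U, IsOpen U → (A ∩ U).Nonempty → ∃ x ∈ A ∩ U, ∃ y ∈ A ∩ U, 2 * r < d x y)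
    (T : Set (Set K)) (hT : T.Finite) (hTo : ∀ U ∈ T, IsOpen U ∧ (A ∩ U).Nonempty) :
    ∃ (f : C(K, ℝ)) (T' : Set (Set K)), (∀ x, |f x| ≤ 1) ∧
      (∀ x y, |f x - f y| ≤ 4 / r * d x y) ∧ T'.Finite ∧
      (∀ U ∈ T', IsOpen U ∧ (A ∩ U).Nonempty) ∧
      ∀ U ∈ T, ∀ s : ℝ, s = 1 ∨ s = -1 → ∃ V ∈ T', V ⊆ U ∧ ∀ x ∈ V, f x = s := by
  obtain ⟨F, H, hF, hH, hFH, h⟩ := two_sets d hd_symm hd_tri hd_lsc A r hA T hT hTo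
  obtain ⟨g, hgF, hgH, hg⟩ := lip_urysohn d hd_nonneg hd_symm hd_eq hd_tri hd_lsc F H
    hF.isClosed hH.isClosed r hFH hr
  let k : K → ℝ := fun x => 4 / r * g x - 2
  have hk : Continuous k := by fun_prop
  have hkF : ∀ x ∈ F, k x < -1 := fun x hx => by
    have : 4 / r * g x ≤ 0 := mul_nonpos_of_nonneg_of_nonpos (by positivity) (hgF x hx)
    simp only [k]; linarith
  have hkH : ∀ x ∈ H, 1 < k x := fun x hx => by
    have : 4 / r * r ≤ 4 / r * g x := mul_le_mul_of_nonneg_left (hgH x hx) (by positivity)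
    have h4 : 4 / r * r = 4 := by field_simp
    simp only [k]; linarith
  let T' : Set (Set K) := (fun U => U ∩ {x | 1 < k x}) '' T ∪ (fun U => U ∩ {x | k x < -1}) '' T
  refine ⟨⟨fun x => max (-1) (min 1 (k x)), by fun_prop⟩, T', ?_, ?_, ?_, ?_, ?_⟩
  · intro x
    simp only [ContinuousMap.coe_mk]
    rw [abs_le]
    exact ⟨le_max_left _ _, max_le (by norm_num) (min_le_left _ _)⟩
  · intro x y
    simp only [ContinuousMap.coe_mk]
    have h1 : |max (-1) (min 1 (k x)) - max (-1) (min 1 (k y))| ≤ |k x - k y| := by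
      have e1 := abs_max_sub_max_le_abs (min 1 (k x)) (min 1 (k y)) (-1)
      have e2 := abs_min_sub_min_le_max 1 (k x) 1 (k y)
      rw [max_comm (-1), max_comm (-1)]
      refine e1.trans ?_
      simpa using e2
    refine h1.trans ?_
    have h2 : k x - k y = 4 / r * (g x - g y) := by simp only [k]; ring
    rw [h2, abs_mul, abs_of_pos (by positivity : 0 < 4 / r)]
    exact mul_le_mul_of_nonneg_left (hg x y) (by positivity)
  · exact (hT.image _).union (hT.image _)
  · rintro _ (⟨U, hU, rfl⟩ | ⟨U, hU, rfl⟩)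
    · refine ⟨(hTo U hU).1.inter (isOpen_lt continuous_const hk), ?_⟩
      obtain ⟨x, hx, hxH⟩ := (h U hU).2
      exact ⟨x, hx.1, hx.2, hkH x hxH⟩
    · refine ⟨(hTo U hU).1.inter (isOpen_lt hk continuous_const), ?_⟩
      obtain ⟨x, hx, hxH⟩ := (h U hU).1
      exact ⟨x, hx.1, hx.2, hkF x hxH⟩
  · rintro U hU s (rfl | rfl)
    · refine ⟨_, Or.inl ⟨U, hU, rfl⟩, inter_subset_left, ?_⟩
      rintro x ⟨-, hx⟩
      simp only [mem_ofPred_eq] at hx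
      simp [hx.le]
    · refine ⟨_, Or.inr ⟨U, hU, rfl⟩, inter_subset_left, ?_⟩
      rintro x ⟨-, hx⟩
      simp only [mem_ofPred_eq] at hx
      simp [hx.le]

lemma indep_seq {K : Type*} [TopologicalSpace K] [CompactSpace K] [T2Space K]
    (d : K → K → ℝ)
    (hd_nonneg : ∀ x y, 0 ≤ d x y)
    (hd_symm : ∀ x y, d x y = d y x)
    (hd_eq : ∀ x y, d x y = 0 ↔ x = y)
    (hd_tri : ∀ x y z, d x z ≤ d x y + d y z)
    (hd_lsc : LowerSemicontinuous fun p : K × K => d p.1 p.2)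
    (A : Set K) (hAne : A.Nonempty) (r : ℝ) (hr : 0 < r)
    (hA : ∀ U, IsOpen U → (A ∩ U).Nonempty → ∃ x ∈ A ∩ U, ∃ y ∈ A ∩ U, 2 * r < d x y) :
    ∃ f : ℕ → C(K, ℝ), (∀ n x, |f n x| ≤ 1) ∧
      (∀ n x y, |f n x - f n y| ≤ 4 / r * d x y) ∧
      ∀ s : ℕ → ℝ, (∀ n, s n = 1 ∨ s n = -1) → ∃ t, ∀ n, f n t = s n := by
  have key : ∀ T : {T : Set (Set K) // T.Finite ∧ ∀ U ∈ T, IsOpen U ∧ (A ∩ U).Nonempty},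
      ∃ (f : C(K, ℝ)) (T' : {T : Set (Set K) // T.Finite ∧ ∀ U ∈ T, IsOpen U ∧ (A ∩ U).Nonempty}),
      (∀ x, |f x| ≤ 1) ∧ (∀ x y, |f x - f y| ≤ 4 / r * d x y) ∧
      ∀ U ∈ T.1, ∀ s : ℝ, s = 1 ∨ s = -1 → ∃ V ∈ T'.1, V ⊆ U ∧ ∀ x ∈ V, f x = s := by
    rintro ⟨T, hT, hTo⟩
    obtain ⟨f, T', h1, h2, h3, h4, h5⟩ := tree_step d hd_nonneg hd_symm hd_eq hd_tri hd_lsc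
      A r hr hA T hT hTo
    exact ⟨f, ⟨T', h3, h4⟩, h1, h2, h5⟩
  choose f nxt h1 h2 h3 using key
  let seq : ℕ → {T : Set (Set K) // T.Finite ∧ ∀ U ∈ T, IsOpen U ∧ (A ∩ U).Nonempty} :=
    fun n => Nat.rec ⟨{univ}, by simp, by simpa using hAne⟩ (fun _ T => nxt T) n
  refine ⟨fun n => f (seq n), fun n => h1 _, fun n => h2 _, ?_⟩
  intro s hs
  have hfin : ∀ N, ∃ U ∈ (seq N).1, ∀ i < N, ∀ x ∈ U, f (seq i) x = s i := by
    intro N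
    induction N with
    | zero => exact ⟨univ, by simp [seq], by simp⟩
    | succ N ih =>
      obtain ⟨U, hU, hUs⟩ := ih
      obtain ⟨V, hV, hVU, hVs⟩ := h3 (seq N) U hU (s N) (hs N)
      refine ⟨V, hV, fun i hi x hx => ?_⟩
      rcases Nat.lt_succ_iff_lt_or_eq.1 hi with hi | rfl
      · exact hUs i hi x (hVU hx)
      · exact hVs x hx
  have hcl : ∀ N, IsClosed {x | ∀ i < N, f (seq i) x = s i} := by
    intro N
    have : {x | ∀ i < N, f (seq i) x = s i} = ⋂ i, ⋂ (_ : i < N), {x | f (seq i) x = s i} := by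
      ext x; simp
    rw [this]
    exact isClosed_iInter fun i => isClosed_iInter fun _ =>
      isClosed_eq (f (seq i)).continuous continuous_const
  obtain ⟨t, ht⟩ := IsCompact.nonempty_iInter_of_sequence_nonempty_isCompact_isClosed
    (fun N => {x | ∀ i < N, f (seq i) x = s i})
    (fun N x hx i hi => hx i (hi.trans (Nat.lt_succ_self N)))
    (fun N => by
      obtain ⟨U, hU, hUs⟩ := hfin N
      obtain ⟨x, hx⟩ := ((seq N).2.2 U hU).2
      exact ⟨x, fun i hi => hUs i hi x hx.2⟩)
    (hcl 0).isCompact hcl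
  exact ⟨t, fun n => mem_iInter.1 ht (n + 1) n (Nat.lt_succ_self n)⟩

lemma l1_hasSum (a : lp (fun _ : ℕ => ℝ) 1) : HasSum (fun n => ‖a n‖) ‖a‖ := by
  have := lp.hasSum_norm (p := 1) (by simp) a
  simpa using this

lemma l1_op {E : Type*} [NormedAddCommGroup E] [NormedSpace ℝ E] [CompleteSpace E]
    (f : ℕ → E) (hf : ∀ n, ‖f n‖ ≤ 1) :
    ∃ J : lp (fun _ : ℕ => ℝ) 1 →L[ℝ] E, (∀ a, ‖J a‖ ≤ ‖a‖) ∧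
      ∀ a, HasSum (fun n => a n • f n) (J a) := by
  have hle : ∀ (a : lp (fun _ : ℕ => ℝ) 1) n, ‖a n • f n‖ ≤ ‖a n‖ := fun a n => by
    rw [norm_smul]
    exact mul_le_of_le_one_right (norm_nonneg _) (hf n)
  have hs : ∀ a : lp (fun _ : ℕ => ℝ) 1, Summable fun n => a n • f n := fun a =>
    Summable.of_norm_bounded (l1_hasSum a).summable (hle a)
  have hn : ∀ a : lp (fun _ : ℕ => ℝ) 1, ‖∑' n, a n • f n‖ ≤ ‖a‖ := fun a =>
    tsum_of_norm_bounded (l1_hasSum a) (hle a)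
  let J0 : lp (fun _ : ℕ => ℝ) 1 →ₗ[ℝ] E :=
    { toFun := fun a => ∑' n, a n • f n
      map_add' := fun a b => by
        rw [← (hs a).tsum_add (hs b)]
        refine tsum_congr fun n => ?_
        rw [lp.coeFn_add, Pi.add_apply, add_smul]
      map_smul' := fun c a => by
        simp only [RingHom.id_apply]
        rw [← (hs a).tsum_const_smul c]
        refine tsum_congr fun n => ?_
        rw [lp.coeFn_smul, Pi.smul_apply, smul_smul, smul_eq_mul] }
  refine ⟨J0.mkContinuous 1 fun a => by rw [one_mul]; exact hn a, fun a => hn a, fun a => ?_⟩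
  exact (hs a).hasSum

lemma forward {K : Type*} [TopologicalSpace K] [CompactSpace K] [T2Space K]
    (d : K → K → ℝ)
    (hd_nonneg : ∀ x y, 0 ≤ d x y)
    (hd_symm : ∀ x y, d x y = d y x)
    (hd_eq : ∀ x y, d x y = 0 ↔ x = y)
    (hd_tri : ∀ x y z, d x z ≤ d x y + d y z)
    (hd_lsc : LowerSemicontinuous fun p : K × K => d p.1 p.2)
    (hfr : ¬ (∀ A : Set K, A.Nonempty → ∀ ε > 0, ∃ U : Set K, IsOpen U ∧
        (A ∩ U).Nonempty ∧ ∀ x ∈ A ∩ U, ∀ y ∈ A ∩ U, d x y < ε)) :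
    ∃ J : lp (fun _ : ℕ => ℝ) 1 →L[ℝ] C(K, ℝ),
        (∀ a, ‖J a‖ = ‖a‖) ∧
        (∀ a, ∃ L ≥ 0, ∀ t₁ t₂ : K, |J a t₁ - J a t₂| ≤ L * d t₁ t₂) := by
  push Not at hfr
  obtain ⟨A, hAne, ε, hε, hA⟩ := hfr
  obtain ⟨f, hf1, hfL, hfs⟩ := indep_seq d hd_nonneg hd_symm hd_eq hd_tri hd_lsc A hAne (ε / 3)
    (by positivity) (fun U hU hAU => by
      obtain ⟨x, hx, y, hy, hxy⟩ := hA U hU hAU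
      exact ⟨x, hx, y, hy, by linarith⟩)
  obtain ⟨J, hJ1, hJ2⟩ := l1_op f fun n => (ContinuousMap.norm_le _ zero_le_one).2 (hf1 n)
  have hpt : ∀ a t, HasSum (fun n => a n * f n t) (J a t) := fun a t => by
    have := (hJ2 a).mapL (ContinuousMap.evalCLM ℝ t)
    simpa using this
  refine ⟨J, fun a => le_antisymm (hJ1 a) ?_, fun a => ⟨4 / (ε / 3) * ‖a‖, by positivity, ?_⟩⟩
  · obtain ⟨t, ht⟩ := hfs (fun n => if 0 ≤ a n then 1 else -1) (fun n => by
      split_ifs <;> simp)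
    have h1 : (fun n => a n * f n t) = fun n => ‖a n‖ := by
      funext n
      rw [ht n, Real.norm_eq_abs]
      split_ifs with h
      · rw [abs_of_nonneg h, mul_one]
      · rw [abs_of_neg (not_le.1 h)]; ring
    have h2 : J a t = ‖a‖ := by
      have := hpt a t
      rw [h1] at this
      exact this.unique (l1_hasSum a)
    calc ‖a‖ = J a t := h2.symm
      _ ≤ ‖J a t‖ := le_abs_self _
      _ ≤ ‖J a‖ := (J a).norm_coe_le_norm t
  · intro x y
    have h1 := (hpt a x).sub (hpt a y)
    rw [← h1.tsum_eq, ← Real.norm_eq_abs]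
    refine tsum_of_norm_bounded (((l1_hasSum a).mul_left (4 / (ε / 3))).mul_right (d x y)) ?_
    intro n
    rw [← mul_sub, norm_mul, Real.norm_eq_abs (f n x - f n y)]
    calc ‖a n‖ * |f n x - f n y| ≤ ‖a n‖ * (4 / (ε / 3) * d x y) :=
          mul_le_mul_of_nonneg_left (hfL n x y) (norm_nonneg _)
      _ = _ := by ring

end FragL1

namespace FragL1
open Set Filter Topology
open MeasureTheory

lemma max_cut {ι : Type*} (t : Finset ι) (w : ι → ℝ) (n m : ι → ℕ)
    (hnm : ∀ i ∈ t, n i ≠ m i) :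
    ∃ σ : ℕ → ℝ, (∀ k, σ k = 1 ∨ σ k = -1) ∧ ∑ i ∈ t, w i * (σ (n i) * σ (m i)) ≤ 0 := by
  classical
  have key : ∀ N : ℕ, ∃ σ : ℕ → ℝ, (∀ k, σ k = 1 ∨ σ k = -1) ∧
      ∑ i ∈ t, w i * (if n i < N ∧ m i < N then σ (n i) * σ (m i) else 0) ≤ 0 := by
    intro N
    induction N with
    | zero => exact ⟨fun _ => 1, by simp, by simp⟩
    | succ N ih =>
      obtain ⟨σ, hσ, hs⟩ := ih
      set R : ℝ := ∑ i ∈ t, w i * (if n i = N ∧ m i < N then σ (m i) else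
        if m i = N ∧ n i < N then σ (n i) else 0) with hR
      have hsum : ∀ s : ℝ, ∑ i ∈ t, w i * (if n i < N + 1 ∧ m i < N + 1 then
          Function.update σ N s (n i) * Function.update σ N s (m i) else 0) =
          ∑ i ∈ t, w i * (if n i < N ∧ m i < N then σ (n i) * σ (m i) else 0) + s * R := by
        intro s
        rw [hR, Finset.mul_sum, ← Finset.sum_add_distrib]
        refine Finset.sum_congr rfl fun i hi => ?_
        have hne := hnm i hi
        rcases lt_trichotomy (n i) N with h1 | h1 | h1 <;>
        rcases lt_trichotomy (m i) N with h2 | h2 | h2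
        · have : n i < N + 1 := by omega
          have : m i < N + 1 := by omega
          simp [*, h1.ne, h2.ne]
        · have : n i < N + 1 := by omega
          simp [*, h1.ne]; ring
        · have : ¬ m i < N + 1 := by omega
          simp [*, h1.ne, h2.ne', h2.not_gt]
        · have : m i < N + 1 := by omega
          simp [*, h2.ne]; ring
        · omega
        · have : ¬ m i < N + 1 := by omega
          simp [*, h2.ne', h2.not_gt]
        · have : ¬ n i < N + 1 := by omega
          simp [*, h2.ne, h1.ne', h1.not_gt]
        · have : ¬ n i < N + 1 := by omega
          simp [*, h1.ne', h1.not_gt]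
        · have : ¬ n i < N + 1 := by omega
          simp [*, h1.ne', h1.not_gt, h2.ne']
      have hupd : ∀ s : ℝ, s = 1 ∨ s = -1 → ∀ k, Function.update σ N s k = 1 ∨
          Function.update σ N s k = -1 := by
        intro s hs1 k
        by_cases hk : k = N
        · subst hk; simpa using hs1
        · simpa [hk] using hσ k
      rcases le_total R 0 with h | h
      · exact ⟨Function.update σ N 1, hupd 1 (by simp), by rw [hsum]; linarith⟩
      · exact ⟨Function.update σ N (-1), hupd (-1) (by simp), by rw [hsum]; linarith⟩
  obtain ⟨σ, hσ, h⟩ := key (t.sup n + t.sup m + 1)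
  refine ⟨σ, hσ, ?_⟩
  convert h using 1
  refine Finset.sum_congr rfl fun i hi => ?_
  have h1 : n i ≤ t.sup n := Finset.le_sup hi
  have h2 : m i ≤ t.sup m := Finset.le_sup hi
  rw [if_pos ⟨by omega, by omega⟩]

lemma exists_functional {K : Type*} [TopologicalSpace K] [CompactSpace K]
    (J : lp (fun _ : ℕ => ℝ) 1 →L[ℝ] C(K, ℝ)) (c : ℝ) (hc : 0 < c)
    (hJ : ∀ a, c * ‖a‖ ≤ ‖J a‖) (f : ℕ → C(K, ℝ)) (hf : ∀ n, f n = J (lp.single 1 n (1 : ℝ))) :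
    ∃ (Λ : C(K, ℝ) →L[ℝ] ℝ) (u : ℝ), 0 < u ∧ (∀ h : C(K, ℝ), 0 ≤ h → 0 ≤ Λ h) ∧
      ∀ n m, n ≠ m → u ≤ Λ |f n - f m| := by
  let O : Set C(K, ℝ) := {h | ∀ x, h x < c / 2}
  let S : Set C(K, ℝ) := {h | ∃ n m, n ≠ m ∧ h = |f n - f m|}
  have hO : IsOpen O := by
    have := ContinuousMap.isOpen_setOfPred_mapsTo (X := K) (Y := ℝ) isCompact_univ
      (isOpen_Iio (a := c / 2))
    convert this using 1
    ext h
    simp [O, MapsTo]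
  have hOc : Convex ℝ O := by
    intro h hh k hk a b ha hb hab x
    have h1 := hh x
    have h2 := hk x
    simp only [ContinuousMap.add_apply, ContinuousMap.smul_apply, smul_eq_mul]
    rcases ha.eq_or_lt with rfl | ha
    · have : b = 1 := by linarith
      subst this; simpa using h2
    · nlinarith
  have hdisj : Disjoint O (convexHull ℝ S) := by
    rw [Set.disjoint_left]
    intro h hh hS
    rw [convexHull_eq] at hS
    obtain ⟨ι, t, w, z, hw, hw1, hz, hcm⟩ := hS
    rw [Finset.centerMass_eq_of_sum_1 _ _ hw1] at hcm
    have hz' : ∀ i : ι, ∃ p : ℕ × ℕ, i ∈ t → p.1 ≠ p.2 ∧ z i = |f p.1 - f p.2| := fun i => by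
      by_cases hi : i ∈ t
      · obtain ⟨n, m, h1, h2⟩ := hz i hi
        exact ⟨(n, m), fun _ => ⟨h1, h2⟩⟩
      · exact ⟨(0, 0), fun h => absurd h hi⟩
    choose p hp using hz'
    obtain ⟨σ, hσ, hcut⟩ := max_cut t w (fun i => (p i).1) (fun i => (p i).2)
      fun i hi => (hp i hi).1
    obtain ⟨φ, hφ1, hφ2⟩ := l1_op σ fun n => by rcases hσ n with h | h <;> simp [h]
    have hφs : ∀ n, φ (lp.single 1 n (1 : ℝ)) = σ n := fun n => by
      refine (hφ2 _).unique ?_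
      have e : (fun k => (lp.single 1 n (1 : ℝ) : lp (fun _ : ℕ => ℝ) 1) k • σ k) =
          fun k => if k = n then σ n else 0 := by
        funext k
        by_cases hk : k = n
        · subst hk; simp
        · simp [hk]
      rw [e]
      exact hasSum_ite_eq n (σ n)
    let θ : ι → ℝ := fun i => (σ (p i).1 - σ (p i).2) / 2
    let x : lp (fun _ : ℕ => ℝ) 1 := ∑ i ∈ t, (w i * θ i) •
      (lp.single 1 (p i).1 (1 : ℝ) - lp.single 1 (p i).2 (1 : ℝ))
    have hx1 : 1 ≤ ‖x‖ := by
      have e : φ x = ∑ i ∈ t, w i - ∑ i ∈ t, w i * (σ (p i).1 * σ (p i).2) := by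
        rw [← Finset.sum_sub_distrib]
        simp only [x, map_sum, map_smul, map_sub, hφs, smul_eq_mul]
        refine Finset.sum_congr rfl fun i _ => ?_
        simp only [θ]
        rcases hσ (p i).1 with h1 | h1 <;> rcases hσ (p i).2 with h2 | h2 <;> rw [h1, h2] <;> ring
      have e2 : 1 ≤ φ x := by rw [e, hw1]; linarith
      exact e2.trans ((le_abs_self _).trans (hφ1 x))
    have hx2 : ‖J x‖ ≤ c / 2 := by
      rw [ContinuousMap.norm_le _ (by positivity)]
      intro s
      refine le_trans ?_ (hh s).le
      rw [← hcm]
      have e : J x = ∑ i ∈ t, (w i * θ i) • (f (p i).1 - f (p i).2) := by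
        simp only [x, map_sum, map_smul, map_sub, hf]
      rw [e, ContinuousMap.sum_apply, ContinuousMap.sum_apply]
      refine (norm_sum_le _ _).trans (Finset.sum_le_sum fun i hi => ?_)
      rw [(hp i hi).2]
      simp only [ContinuousMap.smul_apply, smul_eq_mul, ContinuousMap.abs_apply,
        ContinuousMap.sub_apply, Real.norm_eq_abs, abs_mul, abs_of_nonneg (hw i hi)]
      have hθ : |θ i| ≤ 1 := by
        simp only [θ]
        rcases hσ (p i).1 with h1 | h1 <;> rcases hσ (p i).2 with h2 | h2 <;> rw [h1, h2] <;>
          norm_num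
      refine mul_le_mul_of_nonneg_right ?_ (abs_nonneg _)
      exact mul_le_of_le_one_right (hw i hi) hθ
    have := hJ x
    nlinarith
  obtain ⟨Λ, u, h1, h2⟩ := geometric_hahn_banach_open hOc hO (convex_convexHull ℝ S) hdisj
  have hu : 0 < u := by
    have := h1 0 (fun x => by simpa using hc)
    simpa using this
  refine ⟨Λ, u, hu, ?_, ?_⟩
  · intro h hh
    by_contra hneg
    push Not at hneg
    have := h1 ((u / Λ h) • h) (fun x => by
      have e1 : u / Λ h ≤ 0 := (div_neg_of_pos_of_neg hu hneg).le
      have e2 : 0 ≤ h x := hh x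
      simp only [ContinuousMap.smul_apply, smul_eq_mul]
      nlinarith)
    rw [map_smul, smul_eq_mul, div_mul_cancel₀ _ hneg.ne] at this
    exact lt_irrefl _ this
  · intro n m hnm
    exact h2 _ (subset_convexHull ℝ S ⟨n, m, hnm, rfl⟩)

lemma exists_measure {K : Type*} [TopologicalSpace K] [CompactSpace K] [T2Space K]
    [MeasurableSpace K] [BorelSpace K]
    (Λ : C(K, ℝ) →L[ℝ] ℝ) (hΛ : ∀ h : C(K, ℝ), 0 ≤ h → 0 ≤ Λ h) :
    ∃ μ : Measure K, μ.Regular ∧ IsFiniteMeasure μ ∧ ∀ h : C(K, ℝ), Λ h = ∫ x, h x ∂μ := by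
  let Λ' : CompactlySupportedContinuousMap K ℝ →ₚ[ℝ] ℝ :=
  { toFun g := Λ g.toContinuousMap
    map_add' g g' := Λ.map_add g.toContinuousMap g'.toContinuousMap
    map_smul' c g := Λ.map_smul c g.toContinuousMap
    monotone' g g' hgg' := by
      have := hΛ (g'.toContinuousMap - g.toContinuousMap) (fun x => by
        have := hgg' x
        simpa using this)
      rw [map_sub] at this
      simpa using this }
  refine ⟨RealRMK.rieszMeasure Λ', by infer_instance, by infer_instance, fun g ↦ ?_⟩
  let g' : CompactlySupportedContinuousMap K ℝ :=
  { toFun := g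
    hasCompactSupport' := HasCompactSupport.of_compactSpace _ }
  exact (RealRMK.integral_rieszMeasure Λ' g').symm

lemma exists_piece {K : Type*} [TopologicalSpace K] [CompactSpace K] [T2Space K]
    [MeasurableSpace K] [BorelSpace K] (d : K → K → ℝ) (ε : ℝ)
    (hfr : ∀ A : Set K, A.Nonempty → ∃ U : Set K, IsOpen U ∧
        (A ∩ U).Nonempty ∧ ∀ x ∈ A ∩ U, ∀ y ∈ A ∩ U, d x y < ε)
    (μ : Measure K) [μ.Regular] [IsFiniteMeasure μ] (C : Set K) (hC : MeasurableSet C)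
    (hμC : μ C ≠ 0) :
    ∃ D ⊆ C, MeasurableSet D ∧ μ D ≠ 0 ∧ ∀ x ∈ D, ∀ y ∈ D, d x y < ε := by
  let ν := μ.restrict C
  have hreg : ν.Regular := Measure.Regular.restrict_of_measure_ne_top (measure_ne_top μ C)
  let O : Set K := ⋃₀ {U | IsOpen U ∧ ν U = 0}
  have hO : IsOpen O := isOpen_sUnion fun U hU => hU.1
  have hνO : ν O = 0 := by
    rw [hO.measure_eq_iSup_isCompact]
    simp only [ENNReal.iSup_eq_zero]
    intro L hLO hL
    refine hL.measure_zero_of_nhdsWithin fun x hx => ?_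
    obtain ⟨U, ⟨hU, hU0⟩, hxU⟩ := hLO hx
    exact ⟨U, mem_nhdsWithin_of_mem_nhds (hU.mem_nhds hxU), hU0⟩
  have hA : (Oᶜ).Nonempty := by
    rw [nonempty_compl]
    intro h
    rw [h, Measure.restrict_apply_univ] at hνO
    exact hμC hνO
  obtain ⟨U, hU, ⟨x, hxO, hxU⟩, hd⟩ := hfr _ hA
  refine ⟨(Oᶜ ∩ U) ∩ C, inter_subset_right,
    (hO.measurableSet.compl.inter hU.measurableSet).inter hC, ?_, ?_⟩
  · rw [← Measure.restrict_apply (hO.measurableSet.compl.inter hU.measurableSet)]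
    intro h0
    apply hxO
    refine ⟨U, ⟨hU, ?_⟩, hxU⟩
    refine measure_mono_null (t := O ∪ (Oᶜ ∩ U)) ?_ (measure_union_null hνO h0)
    intro y hy
    by_cases h : y ∈ O
    · exact Or.inl h
    · exact Or.inr ⟨h, hy⟩
  · rintro x ⟨hx, -⟩ y ⟨hy, -⟩
    exact hd x hx y hy

lemma exists_cover {K : Type*} [TopologicalSpace K] [CompactSpace K] [T2Space K]
    [MeasurableSpace K] [BorelSpace K] (d : K → K → ℝ) (ε : ℝ)
    (hfr : ∀ A : Set K, A.Nonempty → ∃ U : Set K, IsOpen U ∧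
        (A ∩ U).Nonempty ∧ ∀ x ∈ A ∩ U, ∀ y ∈ A ∩ U, d x y < ε)
    (μ : Measure K) [μ.Regular] [IsFiniteMeasure μ] :
    ∃ P : Set (Set K), P.Countable ∧ (∀ D ∈ P, ∀ x ∈ D, ∀ y ∈ D, d x y < ε) ∧
      μ (⋃₀ P)ᶜ = 0 := by
  let 𝓢 : Set (Set (Set K)) := {P | (∀ D ∈ P, MeasurableSet D ∧ μ D ≠ 0 ∧
    ∀ x ∈ D, ∀ y ∈ D, d x y < ε) ∧ P.PairwiseDisjoint id}
  obtain ⟨P, hP⟩ : ∃ P, Maximal (· ∈ 𝓢) P := by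
    refine zorn_subset 𝓢 fun c hc hchain => ⟨⋃₀ c, ⟨?_, ?_⟩, fun s hs => subset_sUnion_of_mem hs⟩
    · rintro D ⟨Q, hQ, hD⟩
      exact (hc hQ).1 D hD
    · exact (pairwiseDisjoint_sUnion hchain.directedOn).2 fun Q hQ => (hc hQ).2
  have hcount : P.Countable := by
    have := Measure.countable_meas_pos_of_disjoint_iUnion (μ := μ) (As := fun D : P => (D : Set K))
      (fun D => (hP.prop.1 D D.2).1) (fun D E hDE => hP.prop.2 D.2 E.2 (fun h => hDE (Subtype.ext h)))
    have huniv : {i : P | 0 < μ (i : Set K)} = univ := by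
      ext D
      simp only [mem_ofPred_eq, mem_univ, iff_true]
      exact pos_iff_ne_zero.2 (hP.prop.1 D D.2).2.1
    rw [huniv] at this
    exact Set.countable_univ_iff.1 this
  refine ⟨P, hcount, fun D hD => (hP.prop.1 D hD).2.2, ?_⟩
  by_contra hne
  have hm : MeasurableSet (⋃₀ P) := MeasurableSet.sUnion hcount fun D hD => (hP.prop.1 D hD).1
  obtain ⟨D, hDC, hD, hD0, hDd⟩ := exists_piece d ε hfr μ _ hm.compl hne
  have hins : insert D P ∈ 𝓢 := by
    refine ⟨?_, ?_⟩
    · rintro E (rfl | hE)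
      · exact ⟨hD, hD0, hDd⟩
      · exact hP.prop.1 E hE
    · refine hP.prop.2.insert fun E hE _ => ?_
      rw [Set.disjoint_left]
      intro x hx hxE
      exact hDC hx ⟨E, hE, hxE⟩
  have hDP : D ∈ P := hP.le_of_ge hins (subset_insert _ _) (mem_insert _ _)
  apply hD0
  have : D = ∅ := by
    ext x
    simp only [mem_empty_iff_false, iff_false]
    intro hx
    exact hDC hx ⟨D, hDP, hx⟩
  rw [this, measure_empty]

lemma uniform_lip {K : Type*} [TopologicalSpace K] [CompactSpace K]
    (d : K → K → ℝ)
    (hd_nonneg : ∀ x y, 0 ≤ d x y)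
    (hd_eq : ∀ x y, d x y = 0 ↔ x = y)
    (J : lp (fun _ : ℕ => ℝ) 1 →L[ℝ] C(K, ℝ))
    (hL : ∀ a, ∃ L ≥ 0, ∀ t₁ t₂ : K, |J a t₁ - J a t₂| ≤ L * d t₁ t₂) :
    ∃ M, 0 ≤ M ∧ ∀ a t₁ t₂, |J a t₁ - J a t₂| ≤ M * ‖a‖ * d t₁ t₂ := by
  let g : K × K → lp (fun _ : ℕ => ℝ) 1 →L[ℝ] ℝ := fun p =>
    (d p.1 p.2)⁻¹ • (((ContinuousMap.evalCLM ℝ p.1 : C(K, ℝ) →L[ℝ] ℝ) - ContinuousMap.evalCLM ℝ p.2).comp J)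
  have hg : ∀ p a, g p a = (d p.1 p.2)⁻¹ * (J a p.1 - J a p.2) := fun p a => by simp [g]
  obtain ⟨M, hM⟩ := banach_steinhaus (g := g) (fun a => by
    obtain ⟨L, hL0, hL⟩ := hL a
    refine ⟨L, fun p => ?_⟩
    rw [hg, norm_mul, norm_inv, Real.norm_eq_abs, Real.norm_eq_abs, abs_of_nonneg (hd_nonneg _ _)]
    rcases (hd_nonneg p.1 p.2).eq_or_lt with h | h
    · rw [← h]; simpa using hL0
    · rw [inv_mul_le_iff₀ h, mul_comm]
      exact hL _ _)
  refine ⟨max M 0, le_max_right _ _, fun a x y => ?_⟩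
  rcases (hd_nonneg x y).eq_or_lt with h | h
  · have := (hd_eq x y).1 h.symm
    subst this
    rw [← h]; simp
  · have h1 := (g (x, y)).le_of_opNorm_le ((hM (x, y)).trans (le_max_left M 0)) a
    rw [hg, norm_mul, norm_inv, Real.norm_eq_abs, Real.norm_eq_abs,
      abs_of_nonneg (hd_nonneg _ _), inv_mul_le_iff₀ h] at h1
    linarith

lemma backward {K : Type*} [TopologicalSpace K] [CompactSpace K] [T2Space K]
    (d : K → K → ℝ)
    (hd_nonneg : ∀ x y, 0 ≤ d x y)
    (hd_eq : ∀ x y, d x y = 0 ↔ x = y)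
    (J : lp (fun _ : ℕ => ℝ) 1 →L[ℝ] C(K, ℝ))
    (hJ : ∃ c > 0, ∀ a, c * ‖a‖ ≤ ‖J a‖)
    (hL : ∀ a, ∃ L ≥ 0, ∀ t₁ t₂ : K, |J a t₁ - J a t₂| ≤ L * d t₁ t₂)
    (hfr : ∀ A : Set K, A.Nonempty → ∀ ε > 0, ∃ U : Set K, IsOpen U ∧
        (A ∩ U).Nonempty ∧ ∀ x ∈ A ∩ U, ∀ y ∈ A ∩ U, d x y < ε) : False := by
  obtain ⟨c, hc, hJ⟩ := hJ
  obtain ⟨M, hM0, hM⟩ := uniform_lip d hd_nonneg hd_eq J hL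
  obtain ⟨f, hf⟩ : ∃ f : ℕ → C(K, ℝ), ∀ n, f n = J (lp.single 1 n (1 : ℝ)) := ⟨_, fun _ => rfl⟩
  have hsn : ∀ n, ‖(lp.single 1 n (1 : ℝ) : lp (fun _ : ℕ => ℝ) 1)‖ = 1 := fun n => by
    rw [lp.norm_single (by simp)]; simp
  have hfM : ∀ n x y, |f n x - f n y| ≤ M * d x y := fun n x y => by
    have := hM (lp.single 1 n (1 : ℝ)) x y
    rwa [hsn, mul_one, ← hf] at this
  have hfB : ∀ n x, |f n x| ≤ ‖J‖ := fun n x => by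
    have h1 := J.le_opNorm (lp.single 1 n (1 : ℝ))
    rw [hsn, mul_one, ← hf] at h1
    exact ((f n).norm_coe_le_norm x).trans h1
  obtain ⟨Λ, u, hu, hΛ, hΛu⟩ := exists_functional J c hc hJ f hf
  borelize K
  obtain ⟨μ, hreg, hfin, hμ⟩ := exists_measure Λ hΛ
  set m : ℝ := μ.real univ with hm
  have hm0 : 0 ≤ m := measureReal_nonneg
  let ε : ℝ := u / (4 * (M + 1) * (m + 1))
  have hε : 0 < ε := by positivity
  have hεu : 2 * M * ε * m ≤ u / 2 := by
    have : 2 * M * ε * m = (u / 2) * ((M / (M + 1)) * (m / (m + 1))) := by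
      simp only [ε]; field_simp; ring
    rw [this]
    refine mul_le_of_le_one_right (by positivity) ?_
    refine mul_le_one₀ ?_ (by positivity) ?_
    · rw [div_le_one (by positivity)]; linarith
    · rw [div_le_one (by positivity)]; linarith
  obtain ⟨P, hPc, hPd, hP0⟩ := exists_cover d ε (fun A hA => hfr A hA ε hε) μ
  -- a subsequence converging at a chosen point of each piece
  have := hPc.to_subtype
  obtain ⟨pt, hpt⟩ : ∃ pt : {D : P // (D : Set K).Nonempty} → K, ∀ D, pt D ∈ (D.1 : Set K) :=
    ⟨fun D => D.2.some, fun D => D.2.some_mem⟩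
  let v : ℕ → ({D : P // (D : Set K).Nonempty} → ℝ) := fun n D => f n (pt D)
  have hvc : IsCompact (Set.pi univ fun _ : {D : P // (D : Set K).Nonempty} => Icc (-‖J‖) ‖J‖) :=
    isCompact_univ_pi fun _ => isCompact_Icc
  obtain ⟨l, -, ψ, hψ, hlim⟩ := hvc.tendsto_subseq (x := v) fun n D _ => abs_le.1 (hfB n (pt D))
  rw [tendsto_pi_nhds] at hlim
  let g : ℕ → K → ℝ := fun i x => |f (ψ i) x - f (ψ (i + 1)) x|
  have hgc : ∀ i, Continuous (g i) := fun i => by fun_prop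
  have hgB : ∀ i x, g i x ≤ 2 * ‖J‖ := fun i x => by
    have h1 := hfB (ψ i) x
    have h2 := hfB (ψ (i + 1)) x
    have h3 := abs_sub (f (ψ i) x) (f (ψ (i + 1)) x)
    simp only [g]; linarith
  have hg0 : ∀ i x, 0 ≤ g i x := fun i x => abs_nonneg _
  let k : ℕ → K → ℝ := fun i x => max (g i x - 2 * M * ε) 0
  have hkc : ∀ i, Continuous (k i) := fun i => by fun_prop
  have hk0 : Tendsto (fun i => ∫ x, k i x ∂μ) atTop (𝓝 (∫ _, (0 : ℝ) ∂μ)) := by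
    refine tendsto_integral_of_dominated_convergence (fun _ => 2 * ‖J‖)
      (fun i => (hkc i).aestronglyMeasurable) (integrable_const _) ?_ ?_
    · intro i
      refine Eventually.of_forall fun x => ?_
      rw [Real.norm_eq_abs, abs_of_nonneg (le_max_right _ _)]
      refine max_le ?_ (by positivity)
      have : 0 ≤ 2 * M * ε := by positivity
      linarith [hgB i x]
    · have hae : ∀ᵐ x ∂μ, x ∈ ⋃₀ P := hP0
      filter_upwards [hae] with x hx
      obtain ⟨D, hD, hxD⟩ := hx
      let D' : {D : P // (D : Set K).Nonempty} := ⟨⟨D, hD⟩, ⟨x, hxD⟩⟩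
      have hl := hlim D'
      have hl2 := hl.comp (tendsto_add_atTop_nat 1)
      have hdiff := (hl.sub hl2).abs
      simp only [sub_self, abs_zero] at hdiff
      refine squeeze_zero (fun i => le_max_right _ _) (fun i => ?_) hdiff
      refine max_le ?_ (abs_nonneg _)
      have hdx : d x (pt D') ≤ ε := (hPd D hD x hxD _ (hpt D')).le
      have e1 := (hfM (ψ i) x (pt D')).trans (mul_le_mul_of_nonneg_left hdx hM0)
      have e2 := (hfM (ψ (i + 1)) x (pt D')).trans (mul_le_mul_of_nonneg_left hdx hM0)
      simp only [g, v, Function.comp_apply]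
      have e3 : f (ψ i) x - f (ψ (i + 1)) x = (f (ψ i) x - f (ψ i) (pt D')) -
        (f (ψ (i + 1)) x - f (ψ (i + 1)) (pt D')) +
        (f (ψ i) (pt D') - f (ψ (i + 1)) (pt D')) := by ring
      have e4 := abs_add_le ((f (ψ i) x - f (ψ i) (pt D')) -
        (f (ψ (i + 1)) x - f (ψ (i + 1)) (pt D'))) (f (ψ i) (pt D') - f (ψ (i + 1)) (pt D'))
      have e5 := abs_sub (f (ψ i) x - f (ψ i) (pt D')) (f (ψ (i + 1)) x - f (ψ (i + 1)) (pt D'))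
      rw [← e3] at e4
      linarith
  rw [integral_zero] at hk0
  have hlow : ∀ i, u / 2 ≤ ∫ x, k i x ∂μ := by
    intro i
    have h1 := hΛu (ψ i) (ψ (i + 1)) (hψ (Nat.lt_succ_self i)).ne
    rw [hμ] at h1
    have hkI : Integrable (k i) μ :=
      (hkc i).integrable_of_hasCompactSupport (HasCompactSupport.of_compactSpace _)
    have hgI : Integrable (g i) μ :=
      (hgc i).integrable_of_hasCompactSupport (HasCompactSupport.of_compactSpace _)
    have h2 : ∫ x, g i x ∂μ ≤ ∫ x, (k i x + 2 * M * ε) ∂μ := by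
      refine integral_mono hgI (hkI.add (integrable_const _)) fun x => ?_
      have := le_max_left (g i x - 2 * M * ε) 0
      simp only [k]; linarith
    rw [integral_add hkI (integrable_const _), integral_const, smul_eq_mul, ← hm] at h2
    have h3 : ∫ x, |f (ψ i) - f (ψ (i + 1))| x ∂μ = ∫ x, g i x ∂μ := rfl
    rw [h3] at h1
    linarith
  have := ge_of_tendsto' hk0 hlow
  linarith

end FragL1

/-- The following are equivalent: (i) `K` is not fragmented by `d`;
(ii) there is a linear isometric embedding of `ℓ₁` into `C(K)` with `d`-Lipschitz range;
(iii) there is an isomorphic (bounded below) linear embedding of `ℓ₁` into `C(K)` with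
`d`-Lipschitz range. -/
theorem not_fragmented_iff_lipschitz_copy_of_l1
    {K : Type*} [TopologicalSpace K] [CompactSpace K] [T2Space K]
    (d : K → K → ℝ)
    (hd_nonneg : ∀ x y, 0 ≤ d x y)
    (hd_symm : ∀ x y, d x y = d y x)
    (hd_eq : ∀ x y, d x y = 0 ↔ x = y)
    (hd_tri : ∀ x y z, d x z ≤ d x y + d y z)
    (hd_lsc : LowerSemicontinuous fun p : K × K => d p.1 p.2) :
    ((¬ (∀ A : Set K, A.Nonempty → ∀ ε > 0, ∃ U : Set K, IsOpen U ∧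
        (A ∩ U).Nonempty ∧ ∀ x ∈ A ∩ U, ∀ y ∈ A ∩ U, d x y < ε)) ↔
      (∃ J : lp (fun _ : ℕ => ℝ) 1 →L[ℝ] C(K, ℝ),
        (∀ a, ‖J a‖ = ‖a‖) ∧
        (∀ a, ∃ L ≥ 0, ∀ t₁ t₂ : K, |J a t₁ - J a t₂| ≤ L * d t₁ t₂))) ∧
    ((¬ (∀ A : Set K, A.Nonempty → ∀ ε > 0, ∃ U : Set K, IsOpen U ∧
        (A ∩ U).Nonempty ∧ ∀ x ∈ A ∩ U, ∀ y ∈ A ∩ U, d x y < ε)) ↔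
      (∃ J : lp (fun _ : ℕ => ℝ) 1 →L[ℝ] C(K, ℝ),
        (∃ c > 0, ∀ a, c * ‖a‖ ≤ ‖J a‖) ∧
        (∀ a, ∃ L ≥ 0, ∀ t₁ t₂ : K, |J a t₁ - J a t₂| ≤ L * d t₁ t₂))) := by
  have h12 := FragL1.forward d hd_nonneg hd_symm hd_eq hd_tri hd_lsc
  refine ⟨⟨h12, ?_⟩, ⟨fun h => ?_, ?_⟩⟩
  · rintro ⟨J, hJ, hL⟩ hfr
    exact FragL1.backward d hd_nonneg hd_eq J ⟨1, one_pos, fun a => by rw [hJ, one_mul]⟩ hL hfr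
  · obtain ⟨J, hJ, hL⟩ := h12 h
    exact ⟨J, ⟨1, one_pos, fun a => by rw [hJ, one_mul]⟩, hL⟩
  · rintro ⟨J, hJ, hL⟩ hfr
    exact FragL1.backward d hd_nonneg hd_eq J hJ hL hfr
end

section
/- Let K be a compact Hausdorff space. Then K is not scattered (i.e., there exists a nonempty closed subset of K with no isolated points) if and only if there exists an isomorphic embedding (a bounded linear map which is bounded below) of ℓ₁, the Banach space of absolutely summable real sequences with the ℓ₁ norm, into C(K). -/
open Set Filter Topology

namespace L1Embed

abbrev l1 := lp (fun _ : ℕ => ℝ) 1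

lemma hasSum_norm1 (a : l1) : HasSum (fun n => ‖a n‖) ‖a‖ := by
  have := lp.hasSum_norm (p := 1) (by simp) a
  simpa using this

/-- The operator on `ℓ₁` determined by a sequence in the unit ball. -/
lemma exists_l1map {F : Type*} [NormedAddCommGroup F] [NormedSpace ℝ F] [CompleteSpace F]
    (f : ℕ → F) (hf : ∀ n, ‖f n‖ ≤ 1) :
    ∃ T : l1 →L[ℝ] F, (∀ a, HasSum (fun n => a n • f n) (T a)) ∧ ∀ a, ‖T a‖ ≤ ‖a‖ := by
  have hle : ∀ (a : l1) n, ‖a n • f n‖ ≤ ‖a n‖ := fun a n => by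
    rw [norm_smul]
    exact mul_le_of_le_one_right (norm_nonneg _) (hf n)
  have hs : ∀ a : l1, Summable (fun n => a n • f n) := fun a =>
    Summable.of_norm_bounded (hasSum_norm1 a).summable (hle a)
  have hb : ∀ a : l1, ‖∑' n, a n • f n‖ ≤ ‖a‖ := fun a =>
    tsum_of_norm_bounded (hasSum_norm1 a) (hle a)
  refine ⟨LinearMap.mkContinuous
    { toFun := fun a => ∑' n, a n • f n
      map_add' := fun a b => ?_
      map_smul' := fun r a => ?_ } 1 (fun a => by simpa using hb a), fun a => ?_, fun a => ?_⟩
  · rw [← (hs a).tsum_add (hs b)]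
    simp [add_smul]
  · simp only [RingHom.id_apply]
    rw [← (hs a).tsum_const_smul]
    simp [mul_smul]
  · exact (hs a).hasSum
  · exact hb a

universe u

variable {K : Type u} [TopologicalSpace K] [CompactSpace K] [T2Space K]

/-- A tree of perfect sets. -/
lemma exists_tree (C : Set K) (hC : C.Nonempty) (hP : Perfect C) :
    ∃ D : List Bool → Set K, (∀ s, (D s).Nonempty ∧ IsClosed (D s)) ∧
      (∀ b s, D (b :: s) ⊆ D s) ∧ ∀ s, Disjoint (D (false :: s)) (D (true :: s)) := by
  let S := {C : Set K // Perfect C ∧ C.Nonempty}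
  have h : ∀ C : S, ∃ p : Bool → S, (∀ b, (p b).1 ⊆ C.1) ∧ Disjoint (p false).1 (p true).1 := by
    rintro ⟨C, hP, hC⟩
    obtain ⟨C₀, C₁, ⟨a1, a2, a3⟩, ⟨b1, b2, b3⟩, hd⟩ := hP.splitting hC
    exact ⟨fun b => Bool.rec ⟨C₀, a1, a2⟩ ⟨C₁, b1, b2⟩ b, fun b => by cases b <;> assumption, hd⟩
  choose p hp1 hp2 using h
  let D : List Bool → S := fun s => List.rec ⟨C, hP, hC⟩ (fun b _ ih => p ih b) s
  exact ⟨fun s => (D s).1, fun s => ⟨(D s).2.2, (D s).2.1.closed⟩, fun b s => hp1 (D s) b,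
    fun s => hp2 (D s)⟩

lemma tree_disjoint (D : List Bool → Set K) (h1 : ∀ b s, D (b :: s) ⊆ D s)
    (h2 : ∀ s, Disjoint (D (false :: s)) (D (true :: s))) :
    ∀ s t : List Bool, s.length = t.length → s ≠ t → Disjoint (D s) (D t) := by
  intro s
  induction s with
  | nil => intro t ht hn; exact absurd (List.length_eq_zero_iff.1 ht.symm).symm hn
  | cons b s ih =>
    intro t ht hn
    cases t with
    | nil => simp at ht
    | cons c t =>
      by_cases hst : s = t
      · subst hst
        cases b <;> cases c
        · simp at hn
        · exact h2 s
        · exact (h2 s).symm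
        · simp at hn
      · exact (ih t (by simpa using ht) hst).mono (h1 _ _) (h1 _ _)

lemma exists_rademacher (C : Set K) (hC : C.Nonempty) (hP : Perfect C) :
    ∃ f : ℕ → C(K, ℝ), (∀ n, ‖f n‖ ≤ 1) ∧
      ∀ e : ℕ → Bool, ∃ x, ∀ n, f n x = if e n then 1 else -1 := by
  obtain ⟨D, hD, h1, h2⟩ := exists_tree C hC hP
  have hdis := tree_disjoint D h1 h2
  let A : Bool → ℕ → Set K := fun b n => ⋃ s ∈ {l : List Bool | l.length = n}, D (b :: s)
  have hA : ∀ b n, IsClosed (A b n) := fun b n =>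
    (List.finite_length_eq Bool n).isClosed_biUnion fun s _ => (hD _).2
  have hAd : ∀ n, Disjoint (A false n) (A true n) := by
    intro n
    simp only [A, disjoint_iUnion_left, disjoint_iUnion_right]
    intro s hs t ht
    apply hdis
    · simp_all
    · simp
  have hf : ∀ n, ∃ f : C(K, ℝ), EqOn f (fun _ => -1) (A false n) ∧ EqOn f (fun _ => 1) (A true n) ∧
      ‖f‖ ≤ 1 := by
    intro n
    obtain ⟨g, g0, g1, g2⟩ := exists_continuous_zero_one_of_isClosed (hA false n) (hA true n) (hAd n)
    refine ⟨(2 : ℝ) • g - 1, fun x hx => ?_, fun x hx => ?_, ?_⟩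
    · simp [g0 hx]
    · simp [g1 hx]; norm_num
    · rw [ContinuousMap.norm_le _ zero_le_one]
      intro x
      have := g2 x
      simp only [mem_Icc] at this
      simp only [ContinuousMap.sub_apply, ContinuousMap.smul_apply, ContinuousMap.one_apply,
        Real.norm_eq_abs, abs_le, smul_eq_mul]
      constructor <;> linarith
  choose f f0 f1 f2 using hf
  refine ⟨f, f2, fun e => ?_⟩
  obtain ⟨x, hx⟩ := IsCompact.nonempty_iInter_of_sequence_nonempty_isCompact_isClosed
    (fun n => D (PiNat.res e n)) (fun n => h1 _ _) (fun n => (hD _).1) (hD _).2.isCompact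
    (fun n => (hD _).2)
  refine ⟨x, fun n => ?_⟩
  have hxn : x ∈ A (e n) n := by
    simp only [A, mem_iUnion]
    exact ⟨PiNat.res e n, by simp, mem_iInter.1 hx (n + 1)⟩
  cases h : e n
  · rw [h] at hxn; simpa using f0 n hxn
  · rw [h] at hxn; simpa using f1 n hxn

lemma forward (C : Set K) (hC : C.Nonempty) (hP : Perfect C) :
    ∃ J : l1 →L[ℝ] C(K, ℝ), ∃ c > 0, ∀ a, c * ‖a‖ ≤ ‖J a‖ := by
  obtain ⟨f, hf, he⟩ := exists_rademacher C hC hP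
  obtain ⟨J, hJ, -⟩ := exists_l1map f hf
  refine ⟨J, 1, one_pos, fun a => ?_⟩
  obtain ⟨x, hx⟩ := he (fun n => decide (0 ≤ a n))
  have h := (hJ a).map (ContinuousMap.evalCLM ℝ x : C(K, ℝ) →L[ℝ] ℝ)
    (ContinuousMap.evalCLM ℝ x : C(K, ℝ) →L[ℝ] ℝ).continuous
  have h3 : ((ContinuousMap.evalCLM ℝ x : C(K, ℝ) →L[ℝ] ℝ) ∘ fun n => a n • f n) =
      fun n => ‖a n‖ := by
    funext n
    simp only [Function.comp, ContinuousMap.evalCLM_apply, ContinuousMap.smul_apply, hx,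
      decide_eq_true_eq, smul_eq_mul, Real.norm_eq_abs]
    split_ifs with h0
    · rw [abs_of_nonneg h0, mul_one]
    · rw [abs_of_neg (not_le.1 h0)]; ring
  rw [h3] at h
  rw [one_mul, (hasSum_norm1 a).unique h]
  exact (le_abs_self _).trans ((J a).norm_coe_le_norm x)

lemma perfect_of_map {Y : Type} [TopologicalSpace Y] [T2Space Y] (φ : K → Y) (hφ : Continuous φ)
    (D : Set Y) (hD : Perfect D) (hne : D.Nonempty) (hr : D ⊆ range φ) :
    ∃ C : Set K, C.Nonempty ∧ Perfect C := by
  have hcl : IsClosed (φ ⁻¹' D) := hD.closed.preimage hφ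
  have : CompactSpace (φ ⁻¹' D) := isCompact_iff_compactSpace.1 hcl.isCompact
  let X : φ ⁻¹' D → ULift.{u} D := fun x => ULift.up ⟨φ x.1, x.2⟩
  have hX : Continuous X :=
    continuous_uliftUp.comp (Continuous.subtype_mk (hφ.comp continuous_subtype_val) _)
  have hXs : X.Surjective := by
    rintro ⟨⟨d, hd⟩⟩
    obtain ⟨x, rfl⟩ := hr hd
    exact ⟨⟨x, hd⟩, rfl⟩
  obtain ⟨E, hE, hEs, hmin⟩ := exists_compact_surjective_zorn_subset hX hXs
  have hEc : IsCompact E := isCompact_iff_compactSpace.2 hE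
  refine ⟨Subtype.val '' E, ?_, ?_, ?_⟩
  · obtain ⟨d, hd⟩ := hne
    have : (ULift.up ⟨d, hd⟩ : ULift.{u} D) ∈ X '' E := hEs ▸ mem_univ _
    obtain ⟨x, hx, -⟩ := this
    exact ⟨x.1, x, hx, rfl⟩
  · exact (hEc.image continuous_subtype_val).isClosed
  · rintro _ ⟨x, hx, rfl⟩
    by_contra hacc
    rw [accPt_iff_nhds] at hacc
    push Not at hacc
    obtain ⟨U, hU, hUx⟩ := hacc
    obtain ⟨V, hVU, hVo, hxV⟩ := mem_nhds_iff.1 hU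
    let E₀ : Set E := {e | e.1.1 ∉ V}
    have hE₀ : IsClosed E₀ :=
      (hVo.preimage (continuous_subtype_val.comp continuous_subtype_val)).isClosed_compl
    have hne0 : E₀ ≠ univ := fun h => by
      have : (⟨x, hx⟩ : E) ∈ E₀ := h ▸ mem_univ _
      exact this hxV
    have him := hmin E₀ hne0 hE₀
    have key : ∀ d : ULift.{u} D, d ∉ E.domRestrict X '' E₀ → d = X x := by
      intro d hd
      have : d ∈ X '' E := hEs ▸ mem_univ _
      obtain ⟨y, hy, rfl⟩ := this
      by_cases hyV : y.1 ∈ V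
      · have := hUx y.1 ⟨hVU hyV, y, hy, rfl⟩
        rw [Subtype.ext this]
      · exact absurd ⟨⟨y, hy⟩, hyV, rfl⟩ hd
    obtain ⟨⟨d⟩, hd⟩ := (ne_univ_iff_exists_notMem _).1 him
    have hclos : IsClosed (E.domRestrict X '' E₀) :=
      (hE₀.isCompact.image (hX.comp continuous_subtype_val)).isClosed
    obtain ⟨W, hW, hWe⟩ := isOpen_induced_iff.1 (hclos.preimage continuous_uliftUp).isOpen_compl
    have hdW : d.1 ∈ W := by
      have : d ∈ Subtype.val ⁻¹' W := hWe ▸ hd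
      exact this
    obtain ⟨y, ⟨hyW, hyD⟩, hyd⟩ := accPt_iff_nhds.1 (hD.acc d.1 d.2) W (hW.mem_nhds hdW)
    have hy : (ULift.up ⟨y, hyD⟩ : ULift.{u} D) ∉ E.domRestrict X '' E₀ := by
      have : (⟨y, hyD⟩ : D) ∈ Subtype.val ⁻¹' W := hyW
      rw [hWe] at this
      exact this
    exact hyd (congrArg (fun z : ULift.{u} D => z.down.1) ((key _ hy).trans (key _ hd).symm))

/-- Bounded pointwise null sequences are null for positive functionals. -/
lemma positive_null (Λ : C(K, ℝ) →L[ℝ] ℝ) (hΛ : ∀ g : C(K, ℝ), (∀ x, 0 ≤ g x) → 0 ≤ Λ g)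
    (h : ℕ → C(K, ℝ)) (M : ℝ) (hM : ∀ n x, |h n x| ≤ M)
    (h0 : ∀ x, Tendsto (fun n => h n x) atTop (𝓝 0)) :
    Tendsto (fun n => Λ (h n)) atTop (𝓝 0) := by
  let : MeasurableSpace K := borel K
  have : BorelSpace K := ⟨rfl⟩
  let L : CompactlySupportedContinuousMap K ℝ →ₚ[ℝ] ℝ :=
    { toFun := fun g => Λ (g : C(K, ℝ))
      map_add' := fun f g => by
        rw [← map_add]; rfl
      map_smul' := fun r f => by
        rw [RingHom.id_apply, ← map_smul]; rfl
      monotone' := fun f g hfg => by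
        have := hΛ ((g : C(K, ℝ)) - (f : C(K, ℝ))) (fun x => sub_nonneg.2 (hfg x))
        rw [map_sub] at this
        exact sub_nonneg.1 this }
  have hL : ∀ g : C(K, ℝ), Λ g = ∫ x, g x ∂(RealRMK.rieszMeasure L) := by
    intro g
    have := RealRMK.integral_rieszMeasure L (CompactlySupportedContinuousMap.continuousMapEquiv g)
    exact this.symm
  simp_rw [hL]
  have hz : (0 : ℝ) = ∫ x : K, (0 : ℝ) ∂(RealRMK.rieszMeasure L) := by simp
  rw [hz]
  have : MeasureTheory.IsFiniteMeasure (RealRMK.rieszMeasure L) := by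
    infer_instance
  refine MeasureTheory.tendsto_integral_of_dominated_convergence (fun _ => M) (fun n => ?_)
    (MeasureTheory.integrable_const M) (fun n => ?_) ?_
  · exact (h n).continuous.aestronglyMeasurable
  · exact Eventually.of_forall fun x => hM n x
  · exact Eventually.of_forall fun x => h0 x

lemma backward (J : l1 →L[ℝ] C(K, ℝ)) (c : ℝ) (hc : 0 < c) (hJ : ∀ a, c * ‖a‖ ≤ ‖J a‖) :
    ∃ C : Set K, C.Nonempty ∧ Perfect C := by
  let f : ℕ → C(K, ℝ) := fun n => J (lp.single 1 n (1 : ℝ))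
  have hfM : ∀ n x, |f n x| ≤ ‖J‖ := fun n x => by
    refine ((f n).norm_coe_le_norm x).trans ((J.le_opNorm _).trans ?_)
    rw [lp.norm_single (by simp)]
    simp
  let φ : K → (ℕ → ℝ) := fun x n => f n x
  have hφ : Continuous φ := by fun_prop
  by_cases hcount : (range φ).Countable
  swap
  · obtain ⟨D, hD, hne, hsub⟩ := exists_perfect_nonempty_of_isClosed_of_not_countable
      (isCompact_range hφ).isClosed hcount
    exact perfect_of_map φ hφ D hD hne hsub
  exfalso
  have : Countable (range φ) := hcount
  let u : ℕ → (range φ → ℝ) := fun n y => y.1 n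
  have hcomp : IsCompact (Set.univ.pi fun _ : range φ => Icc (-‖J‖) ‖J‖) :=
    isCompact_univ_pi fun _ => isCompact_Icc
  obtain ⟨v, -, m, hm, hlim⟩ := hcomp.tendsto_subseq (x := u) (by
    rintro n ⟨_, x, rfl⟩ -
    exact abs_le.1 (hfM n x))
  have hpt : ∀ x : K, ∃ l, Tendsto (fun k => f (m k) x) atTop (𝓝 l) := fun x =>
    ⟨v ⟨φ x, x, rfl⟩, (tendsto_pi_nhds.1 hlim) ⟨φ x, x, rfl⟩⟩
  obtain ⟨ψ, hψ, hψn⟩ := exists_l1map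
    (fun n => Set.indicator (range fun k => m (2 * k)) (fun _ => (1 : ℝ)) n) (fun n => by
      by_cases hn : n ∈ (range fun k => m (2 * k))
      · rw [Set.indicator_of_mem hn]; simp
      · rw [Set.indicator_of_notMem hn]; simp)
  have hψs : ∀ i, ψ (lp.single 1 i (1 : ℝ)) =
      Set.indicator (range fun k => m (2 * k)) (fun _ => (1 : ℝ)) i := by
    intro i
    refine (hψ _).unique ?_
    convert hasSum_single i ?_ using 1
    · simp
    · intro j hj
      simp [hj]
  let w : ℕ → l1 := fun k => lp.single 1 (m (2 * k)) (1 : ℝ) - lp.single 1 (m (2 * k + 1)) (1 : ℝ)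
  have hψw : ∀ k, ψ (w k) = 1 := by
    intro k
    simp only [w, map_sub, hψs]
    rw [Set.indicator_of_mem (mem_range_self (f := fun k => m (2 * k)) k), Set.indicator_of_notMem, sub_zero]
    rintro ⟨j, hj⟩
    have := hm.injective hj
    omega
  let T : Set C(K, ℝ) := {h | ∃ a : l1, ψ a = 1 ∧ ∀ x, |J a x| ≤ h x}
  have hTc : Convex ℝ T := by
    rintro g ⟨a, ha, hag⟩ h ⟨b, hb, hbh⟩ s t hs ht hst
    refine ⟨s • a + t • b, ?_, fun x => ?_⟩
    · simp [ha, hb, hst]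
    · simp only [map_add, map_smul, ContinuousMap.add_apply, ContinuousMap.smul_apply, smul_eq_mul]
      refine (abs_add_le _ _).trans ?_
      rw [abs_mul, abs_mul, abs_of_nonneg hs, abs_of_nonneg ht]
      exact add_le_add (mul_le_mul_of_nonneg_left (hag x) hs) (mul_le_mul_of_nonneg_left (hbh x) ht)
  have hdisj : Disjoint (Metric.ball (0 : C(K, ℝ)) c) T := by
    rw [Set.disjoint_left]
    rintro h hh ⟨a, ha, hah⟩
    rw [mem_ball_zero_iff] at hh
    have h1 : ‖J a‖ ≤ ‖h‖ := (ContinuousMap.norm_le _ (norm_nonneg _)).2 fun x =>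
      (hah x).trans ((le_abs_self _).trans (h.norm_coe_le_norm x))
    have h2 := hψn a
    rw [ha, norm_one] at h2
    have h3 := hJ a
    nlinarith
  obtain ⟨Λ, s, hs1, hs2⟩ := geometric_hahn_banach_open (convex_ball _ _) Metric.isOpen_ball hTc hdisj
  have hs : 0 < s := by simpa using hs1 0 (Metric.mem_ball_self hc)
  let h : ℕ → C(K, ℝ) := fun k => |J (w k)|
  have hval : ∀ k x, h k x = |f (m (2 * k)) x - f (m (2 * k + 1)) x| := fun k x => by
    simp [h, w, f]
  have hT : ∀ k, h k ∈ T := fun k => ⟨w k, hψw k, fun x => by simp [h]⟩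
  have hpos : ∀ g : C(K, ℝ), (∀ x, 0 ≤ g x) → 0 ≤ Λ g := by
    intro g hg
    by_contra hneg
    push Not at hneg
    have hmem : ∀ t : ℝ, 0 ≤ t → h 0 + t • g ∈ T := fun t ht =>
      ⟨w 0, hψw 0, fun x => by
        have := mul_nonneg ht (hg x)
        simp [h]
        exact this⟩
    have h1 := hs2 _ (hT 0)
    have h2 := hs2 _ (hmem (Λ (h 0) / (-Λ g)) (div_nonneg (by linarith) (by linarith)))
    rw [map_add, map_smul, smul_eq_mul] at h2
    have : Λ (h 0) / (-Λ g) * Λ g = - Λ (h 0) := by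
      have := hneg.ne
      field_simp
    linarith
  have hlim0 := positive_null Λ hpos h (‖J‖ + ‖J‖) (fun k x => by
    rw [hval, abs_abs]
    exact (abs_sub _ _).trans (add_le_add (hfM _ x) (hfM _ x))) (fun x => by
    obtain ⟨l, hl⟩ := hpt x
    simp_rw [hval]
    have e1 : Tendsto (fun k : ℕ => 2 * k) atTop atTop :=
      tendsto_atTop_mono (fun k => by simp only [id]; omega) tendsto_id
    have e2 : Tendsto (fun k : ℕ => 2 * k + 1) atTop atTop :=
      tendsto_atTop_mono (fun k => by simp only [id]; omega) tendsto_id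
    simpa using ((hl.comp e1).sub (hl.comp e2)).abs)
  have := ge_of_tendsto' hlim0 (fun k => hs2 _ (hT k))
  linarith

end L1Embed

/-- A compact Hausdorff space `K` is not scattered (it has a nonempty
closed subset with no isolated points, i.e. a nonempty perfect subset) if and only if
`ℓ₁` embeds isomorphically (boundedly below) into `C(K)`. -/
theorem not_scattered_iff_l1_embeds
    {K : Type*} [TopologicalSpace K] [CompactSpace K] [T2Space K] :
    (∃ C : Set K, C.Nonempty ∧ Perfect C) ↔
      ∃ J : lp (fun _ : ℕ => ℝ) 1 →L[ℝ] C(K, ℝ),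
        ∃ c > 0, ∀ a, c * ‖a‖ ≤ ‖J a‖ := by
  constructor
  · rintro ⟨C, hC, hP⟩
    exact L1Embed.forward C hC hP
  · rintro ⟨J, c, hc, hJ⟩
    exact L1Embed.backward J c hc hJ
end

section
/- Let p ∈ (1, ∞) and suppose there exists a linear isometric embedding of ℓ_p into C(K) whose range consists of d-Lipschitz functions. Then for every p' ∈ [p, ∞) there exists a linear isometric embedding of ℓ_{p'} into C(K) whose range consists of d-Lipschitz functions. -/
/-- The signed power `x ↦ sgn(x) |x|^r`. -/
noncomputable def sgnPow (r x : ℝ) : ℝ := x * |x| ^ (r - 1)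

lemma abs_sgnPow {r : ℝ} (hr : 1 < r) (x : ℝ) : |sgnPow r x| = |x| ^ r := by
  unfold sgnPow
  rw [abs_mul, abs_of_nonneg (Real.rpow_nonneg (abs_nonneg x) _)]
  rcases eq_or_ne x 0 with rfl | hx
  · simp [Real.zero_rpow (show r ≠ 0 by linarith)]
  · have : 0 < |x| := abs_pos.mpr hx
    rw [Real.rpow_sub_one this.ne']
    field_simp

lemma continuous_sgnPow {r : ℝ} (hr : 1 < r) : Continuous (sgnPow r) := by
  unfold sgnPow
  exact continuous_id.mul (continuous_abs.rpow_const fun x => Or.inr (by linarith))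

lemma sgnPow_lip_aux {r : ℝ} (hr : 1 < r) (x y : ℝ) (h : |y| ≤ |x|) :
    |sgnPow r x - sgnPow r y| ≤ r * |x| ^ (r - 1) * |x - y| := by
  rcases eq_or_ne x 0 with rfl | hx
  · have : y = 0 := by simpa using h
    subst this; simp
  have hx0 : 0 < |x| := abs_pos.mpr hx
  set X := |x| ^ (r - 1) with hX
  set Y := |y| ^ (r - 1) with hY
  have hXpos : 0 ≤ X := Real.rpow_nonneg hx0.le _
  have hYX : Y ≤ X := Real.rpow_le_rpow (abs_nonneg y) h (by linarith)
  have key : |y| * (X - Y) ≤ (r - 1) * X * (|x| - |y|) := by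
    have hb := one_add_mul_self_le_rpow_one_add (s := |y| / |x| - 1)
      (by have : 0 ≤ |y| / |x| := by positivity
          linarith) hr.le
    rw [add_sub_cancel, Real.div_rpow (abs_nonneg y) hx0.le] at hb
    have e1 : |x| ^ r = |x| * X := by
      rw [hX, Real.rpow_sub_one hx0.ne']; field_simp
    have e2 : |y| ^ r = |y| * Y := by
      rcases eq_or_ne y 0 with rfl | hy
      · simp [Real.zero_rpow (show r ≠ 0 by linarith)]
      · have hy0 : 0 < |y| := abs_pos.mpr hy
        rw [hY, Real.rpow_sub_one hy0.ne']; field_simp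
    have hX0 : 0 < X := Real.rpow_pos_of_pos hx0 _
    rw [e1, e2, le_div_iff₀ (by positivity)] at hb
    have e3 : (1 + r * (|y| / |x| - 1)) * (|x| * X) = |x| * X + r * (|y| - |x|) * X := by
      field_simp
    rw [e3] at hb
    nlinarith
  have e : sgnPow r x - sgnPow r y = (x - y) * X + y * (X - Y) := by
    unfold sgnPow; ring
  have h1 : |y * (X - Y)| = |y| * (X - Y) := by
    rw [abs_mul, abs_of_nonneg (sub_nonneg.mpr hYX)]
  have h2 : |(x - y) * X| = |x - y| * X := by rw [abs_mul, abs_of_nonneg hXpos]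
  have h3 : |x| - |y| ≤ |x - y| := abs_sub_abs_le_abs_sub x y
  have h4 : (r - 1) * X * (|x| - |y|) ≤ (r - 1) * X * |x - y| :=
    mul_le_mul_of_nonneg_left h3 (mul_nonneg (by linarith) hXpos)
  calc _ ≤ |(x - y) * X| + |y * (X - Y)| := by rw [e]; exact abs_add_le _ _
    _ ≤ _ := by rw [h1, h2]; nlinarith

/-- A factor `k` with `g x - g y = k (x - y)`, and `|k| ≤ r max(|x|,|y|)^(r-1)`. -/
lemma sgnPow_factor {r : ℝ} (hr : 1 < r) (x y : ℝ) :
    ∃ k : ℝ, sgnPow r x - sgnPow r y = k * (x - y) ∧ |k| ≤ r * (max |x| |y|) ^ (r - 1) := by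
  have hl : |sgnPow r x - sgnPow r y| ≤ r * (max |x| |y|) ^ (r - 1) * |x - y| := by
    rcases le_total |y| |x| with h | h
    · rw [max_eq_left h]; exact sgnPow_lip_aux hr x y h
    · rw [max_eq_right h, abs_sub_comm, abs_sub_comm x y]; exact sgnPow_lip_aux hr y x h
  rcases eq_or_ne x y with rfl | hxy
  · exact ⟨0, by simp, by rw [abs_zero]; positivity⟩
  · have h0 : x - y ≠ 0 := sub_ne_zero.mpr hxy
    refine ⟨(sgnPow r x - sgnPow r y) / (x - y), by field_simp, ?_⟩
    rw [abs_div, div_le_iff₀ (abs_pos.mpr h0)]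
    exact hl

lemma exponent_young {P Q P' Q' : ℝ} (h : P.HolderConjugate Q) (h' : P'.HolderConjugate Q')
    (hPP : P < P') (a m : ℝ) (hm : 0 ≤ m) :
    (|a| * m ^ (Q / Q' - 1)) ^ P ≤ |a| ^ P' + m ^ Q := by
  have hP := h.pos
  have hP' := h'.pos
  have hw : P / P' ≤ 1 := (div_le_one hP').mpr hPP.le
  have hw0 : 0 ≤ P / P' := by positivity
  have := Real.geom_mean_le_arith_mean2_weighted hw0 (sub_nonneg.mpr hw)
    (Real.rpow_nonneg (abs_nonneg a) P') (Real.rpow_nonneg hm Q) (by ring)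
  rw [← Real.rpow_mul (abs_nonneg a), ← Real.rpow_mul hm] at this
  have e1 : P' * (P / P') = P := by field_simp
  have e2 : Q * (1 - P / P') = (Q / Q' - 1) * P := by
    have hQ := h.conjugate_eq
    have hQ' := h'.conjugate_eq
    have h1 := h.sub_one_pos
    have h2 := h'.sub_one_pos
    rw [hQ, hQ']
    field_simp
    ring
  rw [e1, e2] at this
  rw [Real.mul_rpow (abs_nonneg a) (Real.rpow_nonneg hm _), ← Real.rpow_mul hm]
  have A := Real.rpow_nonneg (abs_nonneg a) P'
  have B := Real.rpow_nonneg hm Q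
  nlinarith

lemma one_lt_ratio {P Q P' Q' : ℝ} (h : P.HolderConjugate Q) (h' : P'.HolderConjugate Q')
    (hPP : P < P') : 1 < Q / Q' := by
  rw [one_lt_div h'.symm.pos]
  have h1 := h.inv_add_inv_eq_one
  have h2 := h'.inv_add_inv_eq_one
  have : P'⁻¹ < P⁻¹ := (inv_lt_inv₀ h'.pos h.pos).mpr hPP
  have : Q⁻¹ < Q'⁻¹ := by linarith
  exact (inv_lt_inv₀ h.symm.pos h'.symm.pos).mp this

section
variable {K : Type*} [TopologicalSpace K] [CompactSpace K]

lemma J_sum {p : ENNReal} [Fact (1 ≤ p)] (J : lp (fun _ : ℕ => ℝ) p →L[ℝ] C(K, ℝ))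
    (s : Finset ℕ) (c : ℕ → ℝ) (t : K) :
    J (∑ n ∈ s, lp.single p n (c n)) t = ∑ n ∈ s, c n * J (lp.single p n 1) t := by
  rw [map_sum, ContinuousMap.sum_apply]
  refine Finset.sum_congr rfl fun n _ => ?_
  have : lp.single (E := fun _ : ℕ => ℝ) p n (c n) = c n • lp.single p n 1 := by
    rw [← lp.single_smul]; simp
  rw [this, map_smul]; rfl

lemma dual_bound {p : ENNReal} [Fact (1 ≤ p)] {Q : ℝ} (h : p.toReal.HolderConjugate Q)
    (J : lp (fun _ : ℕ => ℝ) p →L[ℝ] C(K, ℝ)) (hJ : ∀ a, ‖J a‖ = ‖a‖)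
    (s : Finset ℕ) (t : K) : ∑ n ∈ s, |J (lp.single p n 1) t| ^ Q ≤ 1 := by
  set x : ℕ → ℝ := fun n => J (lp.single p n 1) t with hx
  have hQ : 1 < Q := h.symm.lt
  set S := ∑ n ∈ s, |x n| ^ Q with hS
  change S ≤ 1
  have hS0 : 0 ≤ S := Finset.sum_nonneg fun n _ => Real.rpow_nonneg (abs_nonneg _) _
  set v : lp (fun _ : ℕ => ℝ) p :=
    ∑ n ∈ s, lp.single (E := fun _ : ℕ => ℝ) p n (SignType.sign (x n) * |x n| ^ (Q - 1)) with hv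
  have h1 : J v t = S := by
    rw [hv, J_sum]
    refine Finset.sum_congr rfl fun n _ => ?_
    change _ * x n = _
    rcases eq_or_ne (x n) 0 with h0 | h0
    · simp [h0, Real.zero_rpow (show Q ≠ 0 by linarith)]
    · have h0' : 0 < |x n| := abs_pos.mpr h0
      rw [mul_right_comm, sign_mul_self, Real.rpow_sub_one h0'.ne']
      field_simp
  have h2 : ‖v‖ ^ p.toReal ≤ S := by
    rw [hv, lp.norm_sum_single h.pos]
    refine Finset.sum_le_sum fun n _ => ?_
    rcases eq_or_ne (x n) 0 with h0 | h0
    · simp [h0, Real.zero_rpow (show Q ≠ 0 by linarith), Real.zero_rpow h.pos.ne']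
    · have h0' : 0 < |x n| := abs_pos.mpr h0
      have hs : |((SignType.sign (x n) : SignType) : ℝ)| = 1 := by
        rcases lt_or_gt_of_ne h0 with h | h
        · simp [sign_neg h]
        · simp [sign_pos h]
      rw [Real.norm_eq_abs, abs_mul, hs, one_mul, abs_of_nonneg (Real.rpow_nonneg h0'.le _),
        ← Real.rpow_mul h0'.le, h.symm.sub_one_mul_conj]
  have h3 : S ≤ ‖v‖ := by
    rw [← h1, ← hJ]; exact (le_abs_self _).trans (ContinuousMap.norm_coe_le_norm (J v) t)
  by_contra hcon
  push Not at hcon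
  have h4 : S ^ p.toReal ≤ S := (Real.rpow_le_rpow hS0 h3 h.nonneg).trans h2
  have h5 : S ^ (1:ℝ) < S ^ p.toReal := Real.rpow_lt_rpow_of_exponent_lt hcon h.lt
  rw [Real.rpow_one] at h5
  linarith

lemma unif_lip (d : K → K → ℝ) (hd_nonneg : ∀ x y, 0 ≤ d x y)
    (hd_eq : ∀ x y, d x y = 0 ↔ x = y)
    {p : ENNReal} [Fact (1 ≤ p)] (J : lp (fun _ : ℕ => ℝ) p →L[ℝ] C(K, ℝ))
    (hL : ∀ a, ∃ L ≥ 0, ∀ t₁ t₂ : K, |J a t₁ - J a t₂| ≤ L * d t₁ t₂) :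
    ∃ C ≥ 0, ∀ a, ∀ t₁ t₂ : K, |J a t₁ - J a t₂| ≤ C * ‖a‖ * d t₁ t₂ := by
  let ev : K → (lp (fun _ : ℕ => ℝ) p →L[ℝ] ℝ) := fun t => (ContinuousMap.evalCLM ℝ t).comp J
  let g : K × K → (lp (fun _ : ℕ => ℝ) p →L[ℝ] ℝ) := fun i => (d i.1 i.2)⁻¹ • (ev i.1 - ev i.2)
  have hg : ∀ i a, g i a = (d i.1 i.2)⁻¹ * (J a i.1 - J a i.2) := fun i a => rfl
  obtain ⟨C, hC⟩ := banach_steinhaus (g := g) (by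
    intro a
    obtain ⟨L, hL0, hL⟩ := hL a
    refine ⟨L, fun i => ?_⟩
    rw [hg, Real.norm_eq_abs, abs_mul, abs_of_nonneg (inv_nonneg.mpr (hd_nonneg _ _))]
    rcases eq_or_ne (d i.1 i.2) 0 with h0 | h0
    · simp [h0, hL0]
    · have : 0 < d i.1 i.2 := lt_of_le_of_ne (hd_nonneg _ _) h0.symm
      rw [inv_mul_le_iff₀ this, mul_comm]; exact hL _ _)
  refine ⟨max C 0, le_max_right _ _, fun a t₁ t₂ => ?_⟩
  rcases eq_or_ne (d t₁ t₂) 0 with h0 | h0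
  · rw [(hd_eq _ _).mp h0]; simp [(hd_eq t₂ t₂).mpr rfl]
  · have hpos : 0 < d t₁ t₂ := lt_of_le_of_ne (hd_nonneg _ _) h0.symm
    have h1 : ‖g (t₁, t₂) a‖ ≤ max C 0 * ‖a‖ :=
      ((g (t₁, t₂)).le_opNorm a).trans
        (mul_le_mul_of_nonneg_right ((hC _).trans (le_max_left _ _)) (norm_nonneg a))
    rw [hg, Real.norm_eq_abs, abs_mul, abs_of_nonneg (inv_nonneg.mpr (hd_nonneg _ _)),
      inv_mul_le_iff₀ hpos] at h1
    rw [mul_comm]; exact h1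

end

lemma hasSum_of_eq {f g : ℕ → ℝ} {c : ℝ} (hf : HasSum f c) (h : ∀ n, g n = f n) : HasSum g c := by
  rwa [funext h]

lemma sgnPow_neg (r x : ℝ) : sgnPow r (-x) = -sgnPow r x := by simp [sgnPow]

/-- Equality case of Hölder, transported by the Mazur map. -/
lemma norming_eq {P Q P' Q' : ℝ} (h : P.HolderConjugate Q) (h' : P'.HolderConjugate Q')
    (hPP : P < P') (a x : ℕ → ℝ) (ha : HasSum (fun n => |a n| ^ P') 1)
    (hx : ∀ s : Finset ℕ, ∑ n ∈ s, |x n| ^ Q ≤ 1)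
    (hb : HasSum (fun n => sgnPow (P' / P) (a n) * x n) 1) (n : ℕ) :
    a n * sgnPow (Q / Q') (x n) = |a n| ^ P' := by
  have hR : 1 < P' / P := (one_lt_div h.pos).mpr hPP
  have hr := one_lt_ratio h h' hPP
  have hbP : ∀ n, |sgnPow (P' / P) (a n)| ^ P = |a n| ^ P' := fun n => by
    rw [abs_sgnPow hR, ← Real.rpow_mul (abs_nonneg _), div_mul_cancel₀ _ h.pos.ne']
  have hxs : Summable fun n => |x n| ^ Q :=
    summable_of_sum_le (fun n => Real.rpow_nonneg (abs_nonneg _) _) hx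
  have hx1 : ∑' n, |x n| ^ Q ≤ 1 :=
    hxs.tsum_le_of_sum_le hx
  -- nonnegative defect
  have hdef : HasSum (fun n => |a n| ^ P' / P + |x n| ^ Q / Q - sgnPow (P' / P) (a n) * x n)
      (1 / P + (∑' n, |x n| ^ Q) / Q - 1) :=
    ((ha.div_const P).add (hxs.hasSum.div_const Q)).sub hb
  have hnn : ∀ n, 0 ≤ |a n| ^ P' / P + |x n| ^ Q / Q - sgnPow (P' / P) (a n) * x n := fun n => by
    have := Real.young_inequality (sgnPow (P' / P) (a n)) (x n) h
    rw [hbP] at this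
    linarith
  have hle : 1 / P + (∑' n, |x n| ^ Q) / Q - 1 ≤ 0 := by
    have h1 := h.inv_add_inv_eq_one
    have : (∑' n, |x n| ^ Q) / Q ≤ 1 / Q := div_le_div_of_nonneg_right hx1 h.symm.nonneg
    rw [one_div] at this ⊢
    linarith
  have hz : |a n| ^ P' / P + |x n| ^ Q / Q - sgnPow (P' / P) (a n) * x n = 0 :=
    le_antisymm ((le_hasSum hdef n fun m _ => hnn m).trans hle) (hnn n)
  set b := sgnPow (P' / P) (a n) with hbdef
  have hbx : |b| * |x n| = |b| ^ P / P + |x n| ^ Q / Q := by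
    refine le_antisymm (Real.young_inequality_of_nonneg (abs_nonneg _) (abs_nonneg _) h) ?_
    rw [hbP, ← abs_mul]
    exact le_trans (by linarith) (le_abs_self (b * x n))
  have hW : |a n| ^ P' = |x n| ^ Q := by
    rw [← hbP]
    exact (Real.young_inequality_eq_iff_of_nonneg (abs_nonneg _) (abs_nonneg _) h).mp hbx
  have hbx0 : 0 ≤ b * x n := by
    have : b * x n = |b| * |x n| := by rw [hbx, hbP]; linarith
    rw [this]; positivity
  have hax0 : 0 ≤ a n * sgnPow (Q / Q') (x n) := by
    unfold sgnPow at hbdef ⊢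
    rw [← mul_assoc]
    refine mul_nonneg ?_ (Real.rpow_nonneg (abs_nonneg _) _)
    rcases eq_or_ne (a n) 0 with h0 | h0
    · simp [h0]
    have : 0 < |a n| ^ (P' / P - 1) := Real.rpow_pos_of_pos (abs_pos.mpr h0) _
    rw [hbdef, mul_right_comm] at hbx0
    exact nonneg_of_mul_nonneg_left hbx0 this
  rw [← abs_of_nonneg hax0, abs_mul, abs_sgnPow hr]
  set W := |a n| ^ P' with hWdef
  have hW0 : 0 ≤ W := Real.rpow_nonneg (abs_nonneg _) _
  have e1 : |a n| = W ^ P'⁻¹ := (Real.rpow_rpow_inv (abs_nonneg _) h'.ne_zero).symm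
  have e2 : |x n| ^ (Q / Q') = W ^ Q'⁻¹ := by
    rw [hW, ← Real.rpow_mul (abs_nonneg _), div_eq_mul_inv]
  rw [e2]
  conv_lhs => rw [e1]
  rw [← Real.rpow_add_of_nonneg hW0 h'.inv_nonneg h'.symm.inv_nonneg, h'.inv_add_inv_eq_one,
    Real.rpow_one]

/-- Finite Hölder bound for the new functions. -/
lemma holder_fin {P Q P' Q' : ℝ} (h : P.HolderConjugate Q) (h' : P'.HolderConjugate Q')
    (hPP : P < P') (a x : ℕ → ℝ) (hx : ∀ s : Finset ℕ, ∑ n ∈ s, |x n| ^ Q ≤ 1) (s : Finset ℕ) :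
    |∑ n ∈ s, a n * sgnPow (Q / Q') (x n)| ≤ (∑ n ∈ s, |a n| ^ P') ^ (1 / P') := by
  have hr := one_lt_ratio h h' hPP
  have hA : 0 ≤ ∑ n ∈ s, |a n| ^ P' :=
    Finset.sum_nonneg fun n _ => Real.rpow_nonneg (abs_nonneg _) _
  have h1 := Real.inner_le_Lp_mul_Lq s (fun n => |a n|) (fun n => |sgnPow (Q / Q') (x n)|) h'
  have h2 : ∑ n ∈ s, |(|sgnPow (Q / Q') (x n)|)| ^ Q' ≤ 1 := by
    refine le_trans (le_of_eq ?_) (hx s)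
    refine Finset.sum_congr rfl fun n _ => ?_
    rw [abs_abs, abs_sgnPow hr, ← Real.rpow_mul (abs_nonneg _),
      div_mul_cancel₀ _ h'.symm.pos.ne']
  have h3 : (∑ n ∈ s, |(|sgnPow (Q / Q') (x n)|)| ^ Q') ^ (1 / Q') ≤ 1 :=
    Real.rpow_le_one (Finset.sum_nonneg fun n _ => Real.rpow_nonneg (abs_nonneg _) _) h2
      h'.symm.one_div_nonneg
  calc _ ≤ ∑ n ∈ s, |a n| * |sgnPow (Q / Q') (x n)| := by
        refine (Finset.abs_sum_le_sum_abs _ _).trans (le_of_eq ?_)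
        exact Finset.sum_congr rfl fun n _ => abs_mul _ _
    _ ≤ _ := h1
    _ ≤ _ := by
        simp only [abs_abs] at h3 ⊢
        exact mul_le_of_le_one_right (Real.rpow_nonneg hA _) h3

theorem lp_lipschitz_embedding_of_larger_exponent
    {K : Type*} [TopologicalSpace K] [CompactSpace K] [T2Space K]
    (d : K → K → ℝ)
    (hd_nonneg : ∀ x y, 0 ≤ d x y)
    (hd_symm : ∀ x y, d x y = d y x)
    (hd_eq : ∀ x y, d x y = 0 ↔ x = y)
    (hd_tri : ∀ x y z, d x z ≤ d x y + d y z)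
    (hd_lsc : LowerSemicontinuous fun p : K × K => d p.1 p.2)
    (p : ENNReal) [Fact (1 ≤ p)] (hp1 : 1 < p) (hp2 : p < ⊤)
    (h : ∃ J : lp (fun _ : ℕ => ℝ) p →L[ℝ] C(K, ℝ),
      (∀ a, ‖J a‖ = ‖a‖) ∧
      (∀ a, ∃ L ≥ 0, ∀ t₁ t₂ : K, |J a t₁ - J a t₂| ≤ L * d t₁ t₂)) :
    ∀ (p' : ENNReal) [Fact (1 ≤ p')], p ≤ p' → p' < ⊤ →
      ∃ J : lp (fun _ : ℕ => ℝ) p' →L[ℝ] C(K, ℝ),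
        (∀ a, ‖J a‖ = ‖a‖) ∧
        (∀ a, ∃ L ≥ 0, ∀ t₁ t₂ : K, |J a t₁ - J a t₂| ≤ L * d t₁ t₂) := by
  intro p' _ hpp' hp'2
  rcases eq_or_lt_of_le hpp' with rfl | hlt
  · exact h
  obtain ⟨J, hJ, hL⟩ := h
  have hPP : p.toReal < p'.toReal := (ENNReal.toReal_lt_toReal hp2.ne hp'2.ne).mpr hlt
  have hP1 : 1 < p.toReal := by
    have := (ENNReal.toReal_lt_toReal ENNReal.one_ne_top hp2.ne).mpr hp1
    simpa using this
  have hc := Real.HolderConjugate.conjExponent hP1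
  have hc' := Real.HolderConjugate.conjExponent (hP1.trans hPP)
  set P := p.toReal with hP
  set P' := p'.toReal with hP'
  set Q := P.conjExponent
  set Q' := P'.conjExponent
  have hr := one_lt_ratio hc hc' hPP
  set r := Q / Q' with hrdef
  let x : ℕ → C(K, ℝ) := fun n => J (lp.single p n 1)
  have hx : ∀ (t : K) (s : Finset ℕ), ∑ n ∈ s, |x n t| ^ Q ≤ 1 :=
    fun t s => dual_bound hc J hJ s t
  let G : ℕ → C(K, ℝ) := fun n => ⟨fun t => sgnPow r (x n t),
    (continuous_sgnPow hr).comp (x n).continuous⟩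
  have hG : ∀ n t, G n t = sgnPow r (x n t) := fun n t => rfl
  have hfin : ∀ (a : ℕ → ℝ) (s : Finset ℕ),
      ‖∑ n ∈ s, a n • G n‖ ≤ (∑ n ∈ s, |a n| ^ P') ^ (1 / P') := by
    intro a s
    rw [ContinuousMap.norm_le _ (Real.rpow_nonneg
      (Finset.sum_nonneg fun n _ => Real.rpow_nonneg (abs_nonneg _) _) _)]
    intro t
    rw [ContinuousMap.sum_apply]
    exact holder_fin hc hc' hPP a (fun n => x n t) (hx t) s
  have hasum : ∀ a : lp (fun _ : ℕ => ℝ) p', HasSum (fun n => |a n| ^ P') (‖a‖ ^ P') :=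
    fun a => lp.hasSum_norm hc'.pos a
  have hsum : ∀ a : lp (fun _ : ℕ => ℝ) p', Summable fun n => a n • G n := by
    intro a
    rw [summable_iff_vanishing_norm]
    intro ε hε
    obtain ⟨s, hs⟩ := summable_iff_vanishing_norm.mp (hasum a).summable (ε ^ P')
      (Real.rpow_pos_of_pos hε _)
    refine ⟨s, fun u hu => (hfin a u).trans_lt ?_⟩
    have h0 : 0 ≤ ∑ n ∈ u, |a n| ^ P' :=
      Finset.sum_nonneg fun n _ => Real.rpow_nonneg (abs_nonneg _) _
    have h1 := (le_abs_self _).trans_lt (hs u hu)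
    have h2 := Real.rpow_lt_rpow h0 h1 hc'.one_div_pos
    rwa [one_div, Real.rpow_rpow_inv hε.le hc'.ne_zero, ← one_div] at h2
  let T : lp (fun _ : ℕ => ℝ) p' →ₗ[ℝ] C(K, ℝ) :=
    { toFun := fun a => ∑' n, a n • G n
      map_add' := fun a b => by
        rw [← (hsum a).tsum_add (hsum b)]
        exact tsum_congr fun n => by rw [lp.coeFn_add, Pi.add_apply, add_smul]
      map_smul' := fun c a => by
        rw [RingHom.id_apply, ← (hsum a).tsum_const_smul]
        exact tsum_congr fun n => by
          rw [lp.coeFn_smul, Pi.smul_apply, smul_eq_mul, mul_smul] }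
  have hT : ∀ a, HasSum (fun n => a n • G n) (T a) := fun a => (hsum a).hasSum
  have hTt : ∀ a t, HasSum (fun n => a n * sgnPow r (x n t)) (T a t) := fun a t =>
    (hT a).mapL (ContinuousMap.evalCLM ℝ t)
  have hTle : ∀ a, ‖T a‖ ≤ ‖a‖ := by
    intro a
    refine le_of_tendsto (hT a).norm (Filter.Eventually.of_forall fun s => ?_)
    refine (hfin a s).trans ?_
    have h1 : ∑ n ∈ s, |a n| ^ P' ≤ ‖a‖ ^ P' := lp.sum_rpow_le_norm_rpow hc'.pos a s
    have h2 := Real.rpow_le_rpow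
      (Finset.sum_nonneg fun n _ => Real.rpow_nonneg (abs_nonneg _) _) h1 hc'.one_div_nonneg
    rwa [one_div, Real.rpow_rpow_inv (norm_nonneg a) hc'.ne_zero, ← one_div] at h2
  have hTge1 : ∀ a, ‖a‖ = 1 → 1 ≤ ‖T a‖ := by
    intro a ha1
    have ha := hasum a
    rw [ha1, Real.one_rpow] at ha
    have hR : 1 < P' / P := (one_lt_div hc.pos).mpr hPP
    have hbP : ∀ n, ‖sgnPow (P' / P) (a n)‖ ^ P = |a n| ^ P' := fun n => by
      rw [Real.norm_eq_abs, abs_sgnPow hR, ← Real.rpow_mul (abs_nonneg _),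
        div_mul_cancel₀ _ hc.pos.ne']
    let b : lp (fun _ : ℕ => ℝ) p := ⟨fun n => sgnPow (P' / P) (a n), memℓp_gen (by
      change Summable fun n => ‖sgnPow (P' / P) (a n)‖ ^ P
      simp only [hbP]; exact ha.summable)⟩
    have hb1 : ‖b‖ = 1 := by
      have h1 := lp.hasSum_norm hc.pos b
      have h2 : HasSum (fun n => ‖b n‖ ^ P) 1 := by
        change HasSum (fun n => ‖sgnPow (P' / P) (a n)‖ ^ P) 1
        simp only [hbP]; exact ha
      have h3 : ‖b‖ ^ P = 1 := h1.unique h2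
      rw [← Real.rpow_rpow_inv (norm_nonneg b) hc.ne_zero, h3, Real.one_rpow]
    obtain ⟨t, ht⟩ : ∃ t, |J b t| = 1 := by
      have hJb : ‖J b‖ = 1 := (hJ b).trans hb1
      have hne : Nonempty K := by
        by_contra hcon
        rw [not_nonempty_iff] at hcon
        have : ‖J b‖ ≤ 0 := (ContinuousMap.norm_le _ le_rfl).mpr fun t => hcon.elim t
        linarith
      obtain ⟨t, -, ht⟩ := isCompact_univ.exists_isMaxOn (Set.univ_nonempty (α := K))
        (f := fun t => ‖J b t‖) (by fun_prop)
      refine ⟨t, le_antisymm (hJb ▸ ContinuousMap.norm_coe_le_norm (J b) t) ?_⟩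
      rw [← hJb]
      exact (ContinuousMap.norm_le _ (norm_nonneg (J b t))).mpr fun u => ht (Set.mem_univ u)
    have hbs : HasSum (fun n => sgnPow (P' / P) (a n) * x n t) (J b t) := by
      have h1 := (lp.hasSum_single hp2.ne b).mapL ((ContinuousMap.evalCLM ℝ t).comp J)
      refine hasSum_of_eq h1 fun n => ?_
      have := J_sum J {n} b t
      rw [Finset.sum_singleton, Finset.sum_singleton] at this
      exact this.symm
    have hone : |T a t| = 1 := by
      rcases eq_or_eq_neg_of_abs_eq ht with h1 | h1
      · rw [h1] at hbs
        have h2 := norming_eq hc hc' hPP a (fun n => x n t) ha (hx t) hbs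
        have h3 : HasSum (fun n => a n * sgnPow r (x n t)) 1 := by
          simpa only [hrdef, h2] using ha
        rw [(hTt a t).unique h3, abs_one]
      · rw [h1] at hbs
        have hbs' := hbs.neg
        rw [neg_neg] at hbs'
        have h2 := norming_eq hc hc' hPP a (fun n => -x n t) ha
          (fun s => by simpa only [abs_neg] using hx t s) (by simpa only [mul_neg] using hbs')
        have h3 : HasSum (fun n => -(a n * sgnPow r (x n t))) 1 := by
          simp only [sgnPow_neg, mul_neg] at h2
          simpa only [hrdef, h2] using ha
        rw [← abs_neg, (hTt a t).neg.unique h3, abs_one]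
    rw [← hone]
    exact ContinuousMap.norm_coe_le_norm (T a) t
  have hTeq : ∀ a, ‖T a‖ = ‖a‖ := by
    intro a
    refine le_antisymm (hTle a) ?_
    rcases eq_or_ne a 0 with rfl | ha
    · simp
    have hna : ‖a‖ ≠ 0 := norm_ne_zero_iff.mpr ha
    have h1 := hTge1 (‖a‖⁻¹ • a) (by
      rw [norm_smul, norm_inv, norm_norm, inv_mul_cancel₀ hna])
    rw [map_smul, norm_smul, norm_inv, norm_norm] at h1
    have hpos : 0 < ‖a‖ := norm_pos_iff.mpr ha
    rwa [le_inv_mul_iff₀ hpos, mul_one] at h1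
  obtain ⟨C, hC0, hC⟩ := unif_lip d hd_nonneg hd_eq J hL
  refine ⟨T.mkContinuous 1 fun a => by rw [one_mul]; exact hTle a, hTeq, fun a => ?_⟩
  set M : ℝ := (r ^ P * (‖a‖ ^ P' + 2)) ^ (1 / P) with hM
  have hr0 : 0 ≤ r := by linarith
  have hM0 : 0 ≤ M := by positivity
  refine ⟨C * M, mul_nonneg hC0 hM0, fun t₁ t₂ => ?_⟩
  change |T a t₁ - T a t₂| ≤ C * M * d t₁ t₂
  choose k hk1 hk2 using fun n => sgnPow_factor hr (x n t₁) (x n t₂)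
  have hdiff : HasSum (fun n => a n * k n * (x n t₁ - x n t₂)) (T a t₁ - T a t₂) := by
    refine hasSum_of_eq ((hTt a t₁).sub (hTt a t₂)) fun n => ?_
    rw [← mul_sub, hk1, mul_assoc]
  refine le_of_tendsto hdiff.norm (Filter.Eventually.of_forall fun s => ?_)
  set v : lp (fun _ : ℕ => ℝ) p :=
    ∑ n ∈ s, lp.single (E := fun _ : ℕ => ℝ) p n (a n * k n) with hv
  have e1 : ∑ n ∈ s, a n * k n * (x n t₁ - x n t₂) = J v t₁ - J v t₂ := by
    rw [hv, J_sum J s (fun n => a n * k n), J_sum J s (fun n => a n * k n),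
      ← Finset.sum_sub_distrib]
    exact Finset.sum_congr rfl fun n _ => mul_sub _ _ _
  have e2 : ‖v‖ ≤ M := by
    have h1 : ‖v‖ ^ P = ∑ n ∈ s, ‖a n * k n‖ ^ P :=
      lp.norm_sum_single hc.pos (fun n => a n * k n) s
    have h2 : ∀ n, ‖a n * k n‖ ^ P ≤ r ^ P * (|a n| ^ P' + (|x n t₁| ^ Q + |x n t₂| ^ Q)) := by
      intro n
      have hm0 : 0 ≤ max |x n t₁| |x n t₂| := le_max_of_le_left (abs_nonneg _)
      have hmr := Real.rpow_nonneg hm0 (r - 1)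
      have hy := exponent_young hc hc' hPP (a n) _ hm0
      have hmQ : (max |x n t₁| |x n t₂|) ^ Q ≤ |x n t₁| ^ Q + |x n t₂| ^ Q := by
        have hA := Real.rpow_nonneg (abs_nonneg (x n t₁)) Q
        have hB := Real.rpow_nonneg (abs_nonneg (x n t₂)) Q
        rcases max_choice |x n t₁| |x n t₂| with h | h <;> rw [h] <;> linarith
      calc ‖a n * k n‖ ^ P ≤ (r * (|a n| * (max |x n t₁| |x n t₂|) ^ (r - 1))) ^ P := by
            refine Real.rpow_le_rpow (norm_nonneg _) ?_ hc.nonneg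
            rw [Real.norm_eq_abs, abs_mul]
            calc _ ≤ |a n| * (r * (max |x n t₁| |x n t₂|) ^ (r - 1)) :=
                  mul_le_mul_of_nonneg_left (hk2 n) (abs_nonneg _)
              _ = _ := by ring
        _ = r ^ P * (|a n| * (max |x n t₁| |x n t₂|) ^ (r - 1)) ^ P :=
            Real.mul_rpow hr0 (by positivity)
        _ ≤ _ := mul_le_mul_of_nonneg_left (hy.trans (by linarith)) (by positivity)
    have h3 : ‖v‖ ^ P ≤ r ^ P * (‖a‖ ^ P' + 2) := by
      rw [h1]
      refine (Finset.sum_le_sum fun n _ => h2 n).trans ?_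
      rw [← Finset.mul_sum, Finset.sum_add_distrib, Finset.sum_add_distrib]
      have hA : ∑ n ∈ s, |a n| ^ P' ≤ ‖a‖ ^ P' := lp.sum_rpow_le_norm_rpow hc'.pos a s
      have hX := hx t₁ s
      have hY := hx t₂ s
      exact mul_le_mul_of_nonneg_left (by linarith) (by positivity)
    have h4 := Real.rpow_le_rpow (by positivity) h3 hc.one_div_nonneg
    rwa [one_div, Real.rpow_rpow_inv (norm_nonneg v) hc.ne_zero, ← one_div] at h4
  rw [e1, Real.norm_eq_abs]
  refine (hC v t₁ t₂).trans ?_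
  exact mul_le_mul_of_nonneg_right (mul_le_mul_of_nonneg_left e2 hC0) (hd_nonneg _ _)
end
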